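/- Let k be a field and S, T totally ordered sets. Every pointwise finite-dimensional, middle exact persistence module M over the product poset S × T is isomorphic to a direct sum of block modules. -/

import Mathlib

namespace PMod

variable (k : Type) [Field k]

/-- A persistence module over a preordered set `P` with values in `k`-vector spaces. -/
structure PersistenceModule (P : Type) [Preorder P] where
  V : P → Type
  [addCommGroup : ∀ x, AddCommGroup (V x)]
  [module : ∀ x, Module k (V x)]
  map : ∀ {x y : P}, x ≤ y → (V x →ₗ[k] V y)
  map_refl : ∀ x : P, map (le_refl x) = LinearMap.id
  map_trans : ∀ {x y z : P} (hxy : x ≤ y) (hyz : y ≤ z),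
      map (le_trans hxy hyz) = (map hyz).comp (map hxy)

attribute [instance] PersistenceModule.addCommGroup PersistenceModule.module

variable {k}

/-- A morphism of persistence modules. -/
structure Hom {P : Type} [Preorder P] (M N : PersistenceModule k P) where
  app : ∀ x, M.V x →ₗ[k] N.V x
  natural : ∀ {x y : P} (h : x ≤ y), (N.map h).comp (app x) = (app y).comp (M.map h)

/-- A morphism of persistence modules is an isomorphism iff it is pointwise bijective. -/
def IsIsoHom {P : Type} [Preorder P] {M N : PersistenceModule k P} (f : Hom M N) : Prop :=
  ∀ x, Function.Bijective (f.app x)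

/-- Two persistence modules are isomorphic if there is a pointwise bijective
morphism between them. -/
def Isomorphic {P : Type} [Preorder P] (M N : PersistenceModule k P) : Prop :=
  ∃ f : Hom M N, IsIsoHom f

/-- The direct sum of a family of persistence modules, taken pointwise
(`Π₀` is the finitely supported product, i.e. the direct sum). -/
noncomputable def directSum {P : Type} [Preorder P] {ι : Type}
    (N : ι → PersistenceModule k P) : PersistenceModule k P where
  V x := Π₀ i, (N i).V x
  map {x y} h := DFinsupp.mapRange.linearMap (fun i => (N i).map h)
  map_refl x := by
    have h : (fun i => (N i).map (le_refl x)) =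
        fun i => (LinearMap.id : (N i).V x →ₗ[k] (N i).V x) :=
      funext fun i => (N i).map_refl x
    rw [h]
    exact DFinsupp.mapRange.linearMap_id
  map_trans {x y z} hxy hyz := by
    have h : (fun i => (N i).map (le_trans hxy hyz)) =
        fun i => ((N i).map hyz).comp ((N i).map hxy) :=
      funext fun i => (N i).map_trans hxy hyz
    rw [h]
    exact DFinsupp.mapRange.linearMap_comp _ _

/-- The binary direct sum of two persistence modules, taken pointwise. -/
def sum2 {P : Type} [Preorder P] (M N : PersistenceModule k P) : PersistenceModule k P where
  V x := M.V x × N.V x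
  map h := (M.map h).prodMap (N.map h)
  map_refl x := by
    rw [M.map_refl, N.map_refl]
    exact LinearMap.prodMap_id
  map_trans hxy hyz := by
    rw [M.map_trans hxy hyz, N.map_trans hxy hyz]
    exact (LinearMap.prodMap_comp _ _ _ _).symm

/-- The zero persistence module predicate. -/
def IsZero {P : Type} [Preorder P] (M : PersistenceModule k P) : Prop :=
  ∀ x, ∀ v : M.V x, v = 0

/-- A persistence module is indecomposable if it is nonzero and whenever it is
isomorphic to a direct sum of two modules, one of the summands is zero. -/
def Indecomposable {P : Type} [Preorder P] (M : PersistenceModule k P) : Prop :=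
  ¬ IsZero M ∧ ∀ M' M'' : PersistenceModule k P,
    Isomorphic M (sum2 M' M'') → IsZero M' ∨ IsZero M''

variable (k)

/-- A subset of a preordered set is convex. -/
def IsConvex {P : Type} [Preorder P] (I : Set P) : Prop :=
  ∀ p q r : P, p ≤ q → q ≤ r → p ∈ I → r ∈ I → q ∈ I

open Classical in
/-- The fibre of the interval module `k_I` at `x`: a copy of `k` if `x ∈ I`, else `0`. -/
noncomputable def kMod {P : Type} [Preorder P] (I : Set P) (x : P) : Submodule k k :=
  if x ∈ I then ⊤ else ⊥

/-- The canonical generator of the fibre of the interval module at a point of `I`. -/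
noncomputable def kGen {P : Type} [Preorder P] {I : Set P} {x : P} (hx : x ∈ I) :
    kMod k I x :=
  ⟨1, by simp [kMod, hx]⟩

open Classical in
/-- The structure maps of the interval module. -/
noncomputable def intervalMap {P : Type} [Preorder P] (I : Set P) {x y : P} (_ : x ≤ y) :
    kMod k I x →ₗ[k] kMod k I y where
  toFun m := if hy : y ∈ I then ⟨(m : k), by simp [kMod, hy]⟩ else 0
  map_add' a b := by
    by_cases hy : y ∈ I <;> simp [hy]
  map_smul' c a := by
    by_cases hy : y ∈ I <;> simp [hy]

theorem kMod_coe_eq_zero {P : Type} [Preorder P] {I : Set P} {x : P} (hx : x ∉ I)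
    (m : kMod k I x) : (m : k) = 0 := by
  have hm := m.2
  simp only [kMod, if_neg hx, Submodule.mem_bot] at hm
  exact hm

/-- The interval module `k_I` of a convex subset `I ⊆ P`: one-dimensional with
identity structure maps on `I`, and zero outside of `I`. -/
noncomputable def intervalModule {P : Type} [Preorder P] (I : Set P) (hI : IsConvex I) :
    PersistenceModule k P where
  V x := kMod k I x
  map h := intervalMap k I h
  map_refl x := by
    ext m
    by_cases hx : x ∈ I
    · simp [intervalMap, hx]
    · simp [intervalMap, hx, kMod_coe_eq_zero k hx m]
  map_trans {x y z} hxy hyz := by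
    ext m
    by_cases hz : z ∈ I
    · by_cases hy : y ∈ I
      · simp [intervalMap, hz, hy]
      · have hx : x ∉ I := fun hx => hy (hI x y z hxy hyz hx hz)
        simp [intervalMap, hz, hy, kMod_coe_eq_zero k hx m]
    · by_cases hy : y ∈ I <;> simp [intervalMap, hz, hy]

/-- The constant persistence module `k_P` with value `k` everywhere. -/
def constModule (P : Type) [Preorder P] : PersistenceModule k P where
  V _ := k
  map _ := LinearMap.id
  map_refl _ := rfl
  map_trans _ _ := rfl

variable {k}

/-- Connectedness of a subset of a preordered set: any two points are joined by
a finite zigzag of comparable points inside the subset. -/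
def IsConn {P : Type} [Preorder P] (I : Set P) : Prop :=
  ∀ p ∈ I, ∀ q ∈ I, ∃ (n : ℕ) (r : ℕ → P), r 0 = p ∧ r n = q ∧ (∀ i ≤ n, r i ∈ I) ∧
    ∀ i < n, r i ≤ r (i + 1) ∨ r (i + 1) ≤ r i

/-- An interval in a poset: a nonempty convex connected subset. -/
def IsInterval {P : Type} [Preorder P] (I : Set P) : Prop :=
  I.Nonempty ∧ IsConvex I ∧ IsConn I

/-- An ideal: a subset closed under going down. -/
def IsIdeal {P : Type} [Preorder P] (I : Set P) : Prop :=
  ∀ p q : P, p ≤ q → q ∈ I → p ∈ I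

/-- A filter: a subset closed under going up. -/
def IsFilter {P : Type} [Preorder P] (I : Set P) : Prop :=
  ∀ p q : P, p ≤ q → p ∈ I → q ∈ I

/-- An interval in a totally ordered set: a nonempty convex subset. -/
def IsIntervalLin {P : Type} [Preorder P] (I : Set P) : Prop :=
  I.Nonempty ∧ IsConvex I

theorem IsConvex.prod {S T : Type} [Preorder S] [Preorder T] {A : Set S} {B : Set T}
    (hA : IsConvex A) (hB : IsConvex B) : IsConvex (A ×ˢ B) := by
  intro p q r hpq hqr hp hr
  exact ⟨hA _ _ _ hpq.1 hqr.1 hp.1 hr.1, hB _ _ _ hpq.2 hqr.2 hp.2 hr.2⟩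

theorem isConvex_univ {P : Type} [Preorder P] : IsConvex (Set.univ : Set P) :=
  fun _ _ _ _ _ _ _ => trivial

/-- A block in the product of two totally ordered sets. -/
def IsBlock {S T : Type} [LinearOrder S] [LinearOrder T] (I : Set (S × T)) : Prop :=
  I.Nonempty ∧ (
    (∃ JS JT, IsIntervalLin JS ∧ IsIdeal JS ∧ IsIntervalLin JT ∧ IsIdeal JT ∧ I = JS ×ˢ JT) ∨
    (∃ JS JT, IsIntervalLin JS ∧ IsFilter JS ∧ IsIntervalLin JT ∧ IsFilter JT ∧ I = JS ×ˢ JT) ∨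
    (∃ JS, IsIntervalLin JS ∧ I = JS ×ˢ (Set.univ : Set T)) ∨
    (∃ JT, IsIntervalLin JT ∧ I = (Set.univ : Set S) ×ˢ JT))

theorem IsBlock.isConvex {S T : Type} [LinearOrder S] [LinearOrder T] {I : Set (S × T)}
    (h : IsBlock I) : IsConvex I := by
  obtain ⟨-, h | h | h | h⟩ := h
  · obtain ⟨JS, JT, hS, -, hT, -, rfl⟩ := h
    exact hS.2.prod hT.2
  · obtain ⟨JS, JT, hS, -, hT, -, rfl⟩ := h
    exact hS.2.prod hT.2
  · obtain ⟨JS, hS, rfl⟩ := h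
    exact hS.2.prod isConvex_univ
  · obtain ⟨JT, hT, rfl⟩ := h
    exact isConvex_univ.prod hT.2

/-- Convexity is inherited by preimages in a subposet. -/
theorem IsConvex.preimage {P : Type} [Preorder P] {J : Set P} (hJ : IsConvex J)
    (Q : Set P) : IsConvex {p : Q | (p : P) ∈ J} :=
  fun p q r hpq hqr hp hr => hJ p q r hpq hqr hp hr

/-- The restriction of a persistence module to a subposet. -/
def restrict {P : Type} [Preorder P] (M : PersistenceModule k P) (Q : Set P) :
    PersistenceModule k Q where
  V q := M.V q
  map h := M.map h
  map_refl q := M.map_refl q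
  map_trans hxy hyz := M.map_trans hxy hyz

/-- Middle exactness for persistence modules over a product of two totally ordered sets:
for every rectangle `a = (x,y) ≤ b = (x,y'), c = (x',y) ≤ d = (x',y')` the sequence
`M_a → M_b ⊕ M_c → M_d` is exact at `M_b ⊕ M_c`. -/
def MiddleExact {S T : Type} [Preorder S] [Preorder T]
    (M : PersistenceModule k (S × T)) : Prop :=
  ∀ (x x' : S) (y y' : T) (hx : x ≤ x') (hy : y ≤ y')
    (mb : M.V (x, y')) (mc : M.V (x', y)),
    M.map (show (x, y') ≤ (x', y') from ⟨hx, le_refl y'⟩) mb =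
      M.map (show (x', y) ≤ (x', y') from ⟨le_refl x', hy⟩) mc →
    ∃ ma : M.V (x, y),
      M.map (show (x, y) ≤ (x, y') from ⟨le_refl x, hy⟩) ma = mb ∧
      M.map (show (x, y) ≤ (x', y) from ⟨hx, le_refl y⟩) ma = mc


theorem IsIdeal.isConvex {P : Type} [Preorder P] {I : Set P} (h : IsIdeal I) : IsConvex I :=
  fun _ q r _ hqr _ hr => h q r hqr hr

theorem IsFilter.isConvex {P : Type} [Preorder P] {I : Set P} (h : IsFilter I) : IsConvex I :=
  fun p q _ hpq _ hp _ => h p q hpq hp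


/-- Convexity of the preimage of a convex subset of `T` in a subposet of `S × T`. -/
theorem IsConvex.preimageSnd {S T : Type} [Preorder S] [Preorder T] {J : Set T}
    (hJ : IsConvex J) (Q : Set (S × T)) : IsConvex {p : ↥Q | (p : S × T).2 ∈ J} :=
  fun p q r hpq hqr hp hr =>
    hJ _ _ _ (Subtype.coe_le_coe.mpr hpq).2 (Subtype.coe_le_coe.mpr hqr).2 hp hr

end PMod


namespace PMod

/-! ### Linear algebra preliminaries -/

section LinAlg
variable {k : Type} [Field k]

theorem ext_functional {Q : Type} [Preorder Q] [IsDirectedOrder Q] (G : Q → Type)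
    [∀ q, AddCommGroup (G q)] [∀ q, Module k (G q)]
    (f : ∀ i j, i ≤ j → G i →ₗ[k] G j) (hrefl : ∀ i x, f i i le_rfl x = x)
    (htrans : ∀ i j l (hij : i ≤ j) (hjl : j ≤ l) x,
      f j l hjl (f i j hij x) = f i l (hij.trans hjl) x)
    (p : Q) (lam : G p →ₗ[k] k) (hker : ∀ q (h : p ≤ q) g, f p q h g = 0 → lam g = 0) :
    ∃ ψ : ∀ q, G q →ₗ[k] k, ψ p = lam ∧ ∀ i j (h : i ≤ j) x, ψ j (f i j h x) = ψ i x := by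
  classical
  have : Nonempty Q := ⟨p⟩
  have : DirectedSystem G (fun i j h => f i j h) :=
    ⟨fun {i} x => hrefl i x, fun {i j l} hij hjl x => htrans _ _ _ hij hjl x⟩
  have hmem : lam ∈ LinearMap.range (Module.DirectLimit.of k Q G f p).dualMap := by
    rw [LinearMap.range_dualMap_eq_dualAnnihilator_ker, Submodule.mem_dualAnnihilator]
    intro g hg
    obtain ⟨j, hj, h0⟩ := Module.DirectLimit.of.zero_exact (LinearMap.mem_ker.1 hg)
    exact hker j hj g h0
  obtain ⟨Ψ, hΨ⟩ := hmem
  refine ⟨fun q => Ψ.comp (Module.DirectLimit.of k Q G f q), hΨ, ?_⟩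
  intro i j h x
  simp [Module.DirectLimit.of_f]

theorem coherent_lift {Q : Type} [Preorder Q] [IsCodirectedOrder Q] (G : Q → Type)
    [∀ q, AddCommGroup (G q)] [∀ q, Module k (G q)] [∀ q, FiniteDimensional k (G q)]
    (f : ∀ i j, i ≤ j → G i →ₗ[k] G j) (hrefl : ∀ i x, f i i le_rfl x = x)
    (htrans : ∀ i j l (hij : i ≤ j) (hjl : j ≤ l) x,
      f j l hjl (f i j hij x) = f i l (hij.trans hjl) x)
    (p : Q) (m : G p) (hm : ∀ q (h : q ≤ p), ∃ w, f q p h w = m) :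
    ∃ v : ∀ q, G q, v p = m ∧ ∀ i j (h : i ≤ j), f i j h (v i) = v j := by
  have key : ∃ ψ : ∀ q, Module.Dual k (Module.Dual k (G q)), ψ p = Module.Dual.eval k (G p) m ∧
      ∀ i j (h : i ≤ j) g, ψ i ((f i j h).dualMap g) = ψ j g := by
    obtain ⟨ψ, hψp, hψ⟩ := ext_functional (k := k) (Q := Qᵒᵈ)
      (fun q => Module.Dual k (G (OrderDual.ofDual q)))
      (fun i j h => (f (OrderDual.ofDual j) (OrderDual.ofDual i) h).dualMap)
      (by
        intro i g
        ext x
        simp [hrefl])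
      (by
        intro i j l hij hjl g
        ext x
        exact congrArg g (htrans _ _ _ _ _ x))
      (OrderDual.toDual p) (Module.Dual.eval k (G p) m)
      (by
        intro q h g hg
        obtain ⟨w, hw⟩ := hm (OrderDual.ofDual q) h
        have h1 := LinearMap.congr_fun hg w
        exact (congrArg g hw).symm.trans h1)
    exact ⟨fun q => ψ (OrderDual.toDual q), hψp, fun i j h g =>
      hψ (OrderDual.toDual j) (OrderDual.toDual i) h g⟩
  obtain ⟨ψ, hψp, hψ⟩ := key
  refine ⟨fun q => (Module.evalEquiv k (G q)).symm (ψ q), ?_, ?_⟩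
  · change (Module.evalEquiv k (G p)).symm (ψ p) = m
    rw [LinearEquiv.symm_apply_eq, hψp]
    rfl
  · intro i j h
    apply (Module.evalEquiv k (G j)).injective
    rw [LinearEquiv.apply_symm_apply]
    ext g
    have h2 : (f i j h).dualMap g ((Module.evalEquiv k (G i)).symm (ψ i))
      = ψ i ((f i j h).dualMap g) := Module.apply_evalEquiv_symm_apply ..
    exact h2.trans (hψ i j h g)

variable {V : Type} [AddCommGroup V] [Module k V] [FiniteDimensional k V]

theorem chain_min {ι : Type} (f : ι → Submodule k V) (Q : ι → Prop) (hne : ∃ i, Q i)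
    (hdir : ∀ i j, Q i → Q j → ∃ l, Q l ∧ f l ≤ f i ∧ f l ≤ f j) :
    ∃ i, Q i ∧ ∀ j, Q j → f i ≤ f j := by
  obtain ⟨i0, h0⟩ := hne
  obtain ⟨a, ⟨i, hi, rfl⟩, hmin⟩ :=
    (wellFounded_lt (α := Submodule k V)).has_min {a | ∃ i, Q i ∧ f i = a} ⟨_, i0, h0, rfl⟩
  refine ⟨i, hi, fun j hj => ?_⟩
  obtain ⟨l, hl, hli, hlj⟩ := hdir i j hi hj
  have : f l = f i := by
    by_contra hne
    exact hmin _ ⟨l, hl, rfl⟩ (lt_of_le_of_ne hli hne)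
  exact this ▸ hlj

theorem min_piece {ι : Type} (κ : ι → Submodule k V) (htot : ∀ i j, κ i ≤ κ j ∨ κ j ≤ κ i)
    (N : Submodule k V) (hN : N ≠ ⊥) :
    ∃ K : Submodule k V, K ≠ ⊥ ∧ K ≤ N ∧ ∀ i, κ i ⊓ N = ⊥ ∨ K ≤ κ i := by
  by_cases h : ∃ i, κ i ⊓ N ≠ ⊥
  · obtain ⟨i, hi, hmin⟩ := chain_min (fun i => κ i ⊓ N) (fun i => κ i ⊓ N ≠ ⊥) h (by
      intro i j hi hj
      rcases htot i j with h | h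
      · exact ⟨i, hi, le_rfl, inf_le_inf_right _ h⟩
      · exact ⟨j, hj, inf_le_inf_right _ h, le_rfl⟩)
    refine ⟨κ i ⊓ N, hi, inf_le_right, fun j => ?_⟩
    by_cases hj : κ j ⊓ N = ⊥
    · exact Or.inl hj
    · exact Or.inr ((hmin j hj).trans inf_le_left)
  · push Not at h
    exact ⟨N, hN, le_rfl, fun i => Or.inl (h i)⟩

theorem max_piece {ι : Type} (κ : ι → Submodule k V) (htot : ∀ i j, κ i ≤ κ j ∨ κ j ≤ κ i)
    (N : Submodule k V) (hN : N ≠ ⊤) :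
    ∃ K : Submodule k V, K ≠ ⊤ ∧ N ≤ K ∧ ∀ i, κ i ⊔ N = ⊤ ∨ κ i ≤ K := by
  by_cases h : ∃ i, κ i ⊔ N ≠ ⊤
  · obtain ⟨i0, h0⟩ := h
    obtain ⟨a, ⟨i, hi, rfl⟩, hmax⟩ :=
      (wellFounded_gt (α := Submodule k V)).has_min {a | ∃ i, κ i ⊔ N ≠ ⊤ ∧ κ i ⊔ N = a}
        ⟨_, i0, h0, rfl⟩
    refine ⟨κ i ⊔ N, hi, le_sup_right, fun j => ?_⟩
    by_cases hj : κ j ⊔ N = ⊤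
    · exact Or.inl hj
    · right
      rcases htot i j with h | h
      · have h1 : κ i ⊔ N ≤ κ j ⊔ N := sup_le_sup_right h _
        have h2 : κ i ⊔ N = κ j ⊔ N := by
          by_contra hne
          exact hmax _ ⟨j, hj, rfl⟩ (lt_of_le_of_ne h1 hne)
        rw [h2]
        exact le_sup_left
      · exact h.trans le_sup_left
  · push Not at h
    exact ⟨N, hN, le_rfl, fun i => Or.inl (h i)⟩

end LinAlg

/-! ### Block summands -/

section Blocks
variable {k : Type} [Field k] {S T : Type} [LinearOrder S] [LinearOrder T]

theorem PersistenceModule.map_map {P : Type} [Preorder P] (M : PersistenceModule k P)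
    {x y z : P} (hxy : x ≤ y) (hyz : y ≤ z) (v : M.V x) :
    M.map hyz (M.map hxy v) = M.map (hxy.trans hyz) v := by
  rw [M.map_trans hxy hyz]
  rfl

theorem PersistenceModule.map_self {P : Type} [Preorder P] (M : PersistenceModule k P)
    {x : P} (h : x ≤ x) (v : M.V x) : M.map h v = v := by
  rw [M.map_refl]
  rfl

/-- A block summand: a copy of a block module in `M` with a retraction. -/
def BlockSummand (M : PersistenceModule k (S × T)) : Prop :=
  ∃ (J : Set (S × T)) (v : ∀ x, M.V x) (φ : ∀ x, M.V x →ₗ[k] k),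
    IsBlock J ∧ (∀ x, x ∉ J → v x = 0) ∧ (∀ x, x ∉ J → φ x = 0) ∧ (∀ x ∈ J, φ x (v x) = 1) ∧
    (∀ x y (h : x ≤ y), x ∈ J → M.map h (v x) = v y) ∧
    (∀ x y (h : x ≤ y), y ∈ J → ∀ w, φ y (M.map h w) = φ x w)

theorem splitting (M : PersistenceModule k (S × T)) (hfd : ∀ p, FiniteDimensional k (M.V p))
    (D F : Set (S × T)) (hD : IsIdeal D) (hF : IsFilter F)
    (hDsup : ∀ x ∈ D, ∀ y ∈ D, x ⊔ y ∈ D) (hFinf : ∀ x ∈ F, ∀ y ∈ F, x ⊓ y ∈ F)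
    (hJ : IsBlock (F ∩ D)) (p : S × T) (hpD : p ∈ D) (hpF : p ∈ F) (m : M.V p)
    (ha : ∀ x (h : x ≤ p), x ∈ F → ∃ w : M.V x, M.map h w = m ∧
      ∀ z (hz : x ≤ z), z ∉ D → M.map hz w = 0)
    (hc : ∀ y (h : p ≤ y), y ∈ D →
      M.map h m ∉ ⨆ (x) (hx : x ≤ y) (_ : x ∉ F), LinearMap.range (M.map hx)) :
    BlockSummand M := by
  classical
  -- the coherent family of lifts
  let W : ∀ x, Submodule k (M.V x) := fun x => ⨅ (z) (hz : x ≤ z) (_ : z ∉ D), LinearMap.ker (M.map hz)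
  have hWmem : ∀ x (w : M.V x), w ∈ W x ↔ ∀ z (hz : x ≤ z), z ∉ D → M.map hz w = 0 := by
    intro x w
    simp [W, Submodule.mem_iInf]
  have hWmap : ∀ x y (h : x ≤ y), ∀ w ∈ W x, M.map h w ∈ W y := by
    intro x y h w hw
    rw [hWmem] at hw ⊢
    intro z hz hzD
    rw [M.map_map]
    exact hw z _ hzD
  obtain ⟨u, hup, hu⟩ : ∃ u : ∀ x : {x // x ∈ F ∧ x ≤ p}, W x.1,
      ((u ⟨p, hpF, le_rfl⟩ : W p) : M.V p) = m ∧
      ∀ (i j : {x // x ∈ F ∧ x ≤ p}) (h : i ≤ j), M.map h (u i : M.V i.1) = (u j : M.V j.1) := by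
    have : IsCodirectedOrder {x // x ∈ F ∧ x ≤ p} :=
      ⟨fun i j => ⟨⟨i.1 ⊓ j.1, hFinf _ i.2.1 _ j.2.1, inf_le_left.trans i.2.2⟩,
        inf_le_left (a := i.1) (b := j.1), inf_le_right (a := i.1) (b := j.1)⟩⟩
    have hmW : m ∈ W p := by
      obtain ⟨w, hw, hw'⟩ := ha p le_rfl hpF
      rw [hWmem]
      rw [M.map_self] at hw
      rw [← hw]
      exact hw'
    obtain ⟨u, hup, hu⟩ := coherent_lift (k := k) (fun x : {x // x ∈ F ∧ x ≤ p} => W x.1)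
      (fun i j h => (M.map h).restrict (hWmap i.1 j.1 h))
      (by
        intro i x
        apply Subtype.ext
        exact M.map_self _ _)
      (by
        intro i j l hij hjl x
        apply Subtype.ext
        exact M.map_map _ _ _)
      ⟨p, hpF, le_rfl⟩ ⟨m, hmW⟩
      (by
        rintro ⟨q, hqF, hqp⟩ h
        obtain ⟨w, hw, hw'⟩ := ha q hqp hqF
        exact ⟨⟨w, (hWmem _ _).2 hw'⟩, Subtype.ext hw⟩)
    refine ⟨u, by rw [hup], ?_⟩
    intro i j h
    exact congrArg Subtype.val (hu i j h)
  -- the coherent family of functionals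
  let Z : ∀ y, Submodule k (M.V y) :=
    fun y => ⨆ (x) (hx : x ≤ y) (_ : x ∉ F), LinearMap.range (M.map hx)
  have hZ : ∀ x y (h : x ≤ y), x ∉ F → ∀ w, M.map h w ∈ Z y := by
    intro x y h hx w
    exact Submodule.mem_iSup_of_mem x (Submodule.mem_iSup_of_mem h
      (Submodule.mem_iSup_of_mem hx ⟨w, rfl⟩))
  have hZmap : ∀ x y (h : x ≤ y), Z x ≤ (Z y).comap (M.map h) := by
    intro x y h
    refine iSup_le fun z => iSup_le fun hz => iSup_le fun hzF => ?_
    rintro _ ⟨w, rfl⟩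
    rw [Submodule.mem_comap, M.map_map]
    exact hZ _ _ _ hzF _
  obtain ⟨ψ, hψp, hψZ, hψ⟩ : ∃ ψ : ∀ y : {y // y ∈ D ∧ p ≤ y}, M.V y.1 →ₗ[k] k,
      ψ ⟨p, hpD, le_rfl⟩ m = 1 ∧ (∀ y : {y // y ∈ D ∧ p ≤ y}, ∀ w ∈ Z y.1, ψ y w = 0) ∧
      ∀ (i j : {y // y ∈ D ∧ p ≤ y}) (h : i ≤ j) w, ψ j (M.map h w) = ψ i w := by
    have : IsDirectedOrder {y // y ∈ D ∧ p ≤ y} :=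
      ⟨fun i j => ⟨⟨i.1 ⊔ j.1, hDsup _ i.2.1 _ j.2.1, i.2.2.trans le_sup_left⟩,
        le_sup_left (a := i.1) (b := j.1), le_sup_right (a := i.1) (b := j.1)⟩⟩
    -- a functional on `M_p`
    let U : {y // y ∈ D ∧ p ≤ y} → Submodule k (M.V p) := fun y => (Z y.1).comap (M.map y.2.2)
    have hUdir : Directed (· ≤ ·) U := by
      intro i j
      refine ⟨⟨i.1 ⊔ j.1, hDsup _ i.2.1 _ j.2.1, i.2.2.trans le_sup_left⟩, ?_, ?_⟩
      · intro w hw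
        have := hZmap i.1 (i.1 ⊔ j.1) le_sup_left hw
        rw [Submodule.mem_comap, M.map_map] at this
        exact this
      · intro w hw
        have := hZmap j.1 (i.1 ⊔ j.1) le_sup_right hw
        rw [Submodule.mem_comap, M.map_map] at this
        exact this
    have : Nonempty {y // y ∈ D ∧ p ≤ y} := ⟨⟨p, hpD, le_rfl⟩⟩
    have hmU : m ∉ ⨆ y, U y := by
      rw [Submodule.mem_iSup_of_directed _ hUdir]
      rintro ⟨y, hy⟩
      exact hc y.1 y.2.2 y.2.1 hy
    obtain ⟨lam0, hlam0, hlamU⟩ := Submodule.exists_le_ker_of_notMem hmU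
    let lam : M.V p →ₗ[k] k := (lam0 m)⁻¹ • lam0
    have hlam1 : lam m = 1 := by simp [lam, hlam0]
    have hlamU' : ∀ y, ∀ w ∈ U y, lam w = 0 := by
      intro y w hw
      have : lam0 w = 0 := hlamU (Submodule.mem_iSup_of_mem y hw)
      simp [lam, this]
    have hlamZ : Z p ≤ LinearMap.ker lam := by
      intro w hw
      refine hlamU' ⟨p, hpD, le_rfl⟩ w ?_
      change M.map _ w ∈ Z p
      rw [M.map_self]
      exact hw
    obtain ⟨ψ, hψp, hψ⟩ := ext_functional (k := k)
      (fun y : {y // y ∈ D ∧ p ≤ y} => M.V y.1 ⧸ Z y.1)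
      (fun i j h => (Z i.1).mapQ (Z j.1) (M.map h) (hZmap i.1 j.1 h))
      (by
        intro i x
        obtain ⟨x, rfl⟩ := Submodule.mkQ_surjective _ x
        simp [M.map_self])
      (by
        intro i j l hij hjl x
        obtain ⟨x, rfl⟩ := Submodule.mkQ_surjective _ x
        simp [M.map_map])
      ⟨p, hpD, le_rfl⟩ ((Z p).liftQ lam hlamZ)
      (by
        intro q h g hg
        obtain ⟨x, rfl⟩ := Submodule.mkQ_surjective _ g
        simp only [Submodule.mkQ_apply, Submodule.mapQ_apply, Submodule.Quotient.mk_eq_zero] at hg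
        simp only [Submodule.mkQ_apply, Submodule.liftQ_apply]
        exact hlamU' q x hg)
    refine ⟨fun y => (ψ y).comp (Z y.1).mkQ, ?_, ?_, ?_⟩
    · simp [hψp, hlam1]
    · intro y w hw
      simp [(Submodule.Quotient.mk_eq_zero (Z y.1)).2 hw]
    · intro i j h w
      have := hψ i j h ((Z i.1).mkQ w)
      simpa using this
  -- assemble
  have hmeet : ∀ y, y ∈ F → y ⊓ p ∈ F ∧ y ⊓ p ≤ p := fun y hy => ⟨hFinf _ hy _ hpF, inf_le_right⟩
  have hjoin : ∀ y, y ∈ D → y ⊔ p ∈ D ∧ p ≤ y ⊔ p := fun y hy => ⟨hDsup _ hy _ hpD, le_sup_right⟩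
  let v : ∀ y, M.V y := fun y => if h : y ∈ F ∧ y ∈ D then
    M.map (inf_le_left : y ⊓ p ≤ y) (u ⟨y ⊓ p, hmeet y h.1⟩ : M.V (y ⊓ p)) else 0
  let φ : ∀ y, M.V y →ₗ[k] k := fun y => if h : y ∈ F ∧ y ∈ D then
    (ψ ⟨y ⊔ p, hjoin y h.2⟩).comp (M.map (le_sup_left : y ≤ y ⊔ p)) else 0
  have hv : ∀ y (h : y ∈ F ∧ y ∈ D), v y =
    M.map (inf_le_left : y ⊓ p ≤ y) (u ⟨y ⊓ p, hmeet y h.1⟩ : M.V (y ⊓ p)) :=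
    fun y h => dif_pos h
  have hφ : ∀ y (h : y ∈ F ∧ y ∈ D) w, φ y w =
    ψ ⟨y ⊔ p, hjoin y h.2⟩ (M.map (le_sup_left : y ≤ y ⊔ p) w) := by
    intro y h w
    simp only [φ, dif_pos h]
    rfl
  have hv0 : ∀ y, ¬ (y ∈ F ∧ y ∈ D) → v y = 0 := fun y h => dif_neg h
  have hφ0 : ∀ y, ¬ (y ∈ F ∧ y ∈ D) → φ y = 0 := fun y h => dif_neg h
  refine ⟨F ∩ D, v, φ, hJ, hv0, hφ0, ?_, ?_, ?_⟩
  · intro x hx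
    rw [hφ x hx, hv x hx, M.map_map]
    have h1 := hu ⟨x ⊓ p, hmeet x hx.1⟩ ⟨p, hpF, le_rfl⟩ (inf_le_right (a := x) (b := p))
    rw [hup] at h1
    have h2 := hψ ⟨p, hpD, le_rfl⟩ ⟨x ⊔ p, hjoin x hx.2⟩ (le_sup_right (a := x) (b := p)) m
    rw [hψp, ← h1, M.map_map] at h2
    exact h2
  · intro y z h hy
    rw [hv y hy, M.map_map]
    by_cases hz : z ∈ D
    · have hz' : z ∈ F ∧ z ∈ D := ⟨hF _ _ h hy.1, hz⟩
      rw [hv z hz', ← hu ⟨y ⊓ p, hmeet y hy.1⟩ ⟨z ⊓ p, hmeet z hz'.1⟩ (inf_le_inf_right p h),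
        M.map_map]
    · rw [hv0 z (fun h => hz h.2)]
      exact (hWmem _ _).1 (u ⟨y ⊓ p, hmeet y hy.1⟩).2 z _ hz
  · intro y z h hz w
    rw [hφ z hz, M.map_map]
    by_cases hy : y ∈ F
    · have hy' : y ∈ F ∧ y ∈ D := ⟨hy, hD _ _ h hz.2⟩
      rw [hφ y hy', ← hψ ⟨y ⊔ p, hjoin y hy'.2⟩ ⟨z ⊔ p, hjoin z hz.2⟩ (sup_le_sup_right h p),
        M.map_map]
    · rw [hφ0 y (fun h => hy h.1)]
      exact hψZ ⟨z ⊔ p, hjoin z hz.2⟩ _ (hZ _ _ _ hy _)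

end Blocks
end PMod

namespace PMod

/-! ### Finding a block summand -/

section Selection
variable {k : Type} [Field k] {S T : Type} [LinearOrder S] [LinearOrder T]

/-- The structure map, in coordinates. -/
def mv (M : PersistenceModule k (S × T)) {x x' : S} {y y' : T} (hx : x ≤ x') (hy : y ≤ y') :
    M.V (x, y) →ₗ[k] M.V (x', y') := M.map (Prod.mk_le_mk.2 ⟨hx, hy⟩)

theorem mv_mv (M : PersistenceModule k (S × T)) {x x' x'' : S} {y y' y'' : T} (hx : x ≤ x')
    (hy : y ≤ y') (hx' : x' ≤ x'') (hy' : y' ≤ y'') (v : M.V (x, y)) :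
    mv M hx' hy' (mv M hx hy v) = mv M (hx.trans hx') (hy.trans hy') v :=
  M.map_map _ _ _

theorem mv_self (M : PersistenceModule k (S × T)) {x : S} {y : T} (hx : x ≤ x) (hy : y ≤ y)
    (v : M.V (x, y)) : mv M hx hy v = v :=
  M.map_self _ _

theorem mv_zero_of (M : PersistenceModule k (S × T)) {x x' x'' : S} {y y' y'' : T} {hx : x ≤ x'}
    {hy : y ≤ y'} (hx' : x' ≤ x'') (hy' : y' ≤ y'') {v : M.V (x, y)} (h : mv M hx hy v = 0) :
    mv M (hx.trans hx') (hy.trans hy') v = 0 := by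
  rw [← mv_mv M hx hy hx' hy', h, map_zero]

theorem ker_mv_mono (M : PersistenceModule k (S × T)) {x x' x'' : S} {y y' y'' : T} (hx : x ≤ x')
    (hy : y ≤ y') (hx' : x' ≤ x'') (hy' : y' ≤ y'') :
    LinearMap.ker (mv M hx hy) ≤ LinearMap.ker (mv M (hx.trans hx') (hy.trans hy')) :=
  fun _ hv => mv_zero_of M hx' hy' hv

theorem range_mv_mono (M : PersistenceModule k (S × T)) {x x' x'' : S} {y y' y'' : T} (hx : x ≤ x')
    (hy : y ≤ y') (hx' : x' ≤ x'') (hy' : y' ≤ y'') :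
    LinearMap.range (mv M (hx.trans hx') (hy.trans hy')) ≤ LinearMap.range (mv M hx' hy') := by
  rintro _ ⟨w, rfl⟩
  exact ⟨mv M hx hy w, mv_mv ..⟩

theorem MiddleExact.lift {M : PersistenceModule k (S × T)} (hme : MiddleExact M)
    {x x' : S} {y y' : T} (hx : x ≤ x') (hy : y ≤ y') (b : M.V (x, y')) (c : M.V (x', y))
    (h : mv M hx le_rfl b = mv M le_rfl hy c) :
    ∃ a : M.V (x, y), mv M le_rfl hy a = b ∧ mv M hx le_rfl a = c :=
  hme x x' y y' hx hy b c h

theorem splitting' (M : PersistenceModule k (S × T)) (hfd : ∀ p, FiniteDimensional k (M.V p))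
    (DS FS : Set S) (DT FT : Set T) (hDS : IsIdeal DS) (hFS : IsFilter FS) (hDT : IsIdeal DT)
    (hFT : IsFilter FT) (s : S) (t : T) (hsD : s ∈ DS) (hsF : s ∈ FS) (htD : t ∈ DT)
    (htF : t ∈ FT) (hJ : IsBlock ((FS ∩ DS) ×ˢ (FT ∩ DT))) (m : M.V (s, t))
    (ha : ∀ x (hx : x ≤ s) y (hy : y ≤ t), x ∈ FS → y ∈ FT → ∃ w : M.V (x, y),
      mv M hx hy w = m ∧ ∀ z1 z2 (h1 : x ≤ z1) (h2 : y ≤ z2), (z1 ∉ DS ∨ z2 ∉ DT) →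
        mv M h1 h2 w = 0)
    (hc : ∀ y1 y2 (h1 : s ≤ y1) (h2 : t ≤ y2), y1 ∈ DS → y2 ∈ DT →
      ∃ P : M.V (y1, y2) → Prop, P 0 ∧ (∀ a b, P a → P b → P (a + b)) ∧
        (∀ x1 x2 (hx1 : x1 ≤ y1) (hx2 : x2 ≤ y2), (x1 ∉ FS ∨ x2 ∉ FT) → ∀ w,
          P (mv M hx1 hx2 w)) ∧ ¬ P (mv M h1 h2 m)) :
    BlockSummand M := by
  refine splitting M hfd (DS ×ˢ DT) (FS ×ˢ FT) ?_ ?_ ?_ ?_ ?_ (s, t) ⟨hsD, htD⟩ ⟨hsF, htF⟩ m ?_ ?_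
  · intro p q h hq
    exact ⟨hDS _ _ h.1 hq.1, hDT _ _ h.2 hq.2⟩
  · intro p q h hq
    exact ⟨hFS _ _ h.1 hq.1, hFT _ _ h.2 hq.2⟩
  · rintro ⟨x1, x2⟩ ⟨h1, h2⟩ ⟨y1, y2⟩ ⟨h3, h4⟩
    refine ⟨?_, ?_⟩
    · change x1 ⊔ y1 ∈ DS
      rcases max_choice x1 y1 with h | h <;> rw [h] <;> assumption
    · change x2 ⊔ y2 ∈ DT
      rcases max_choice x2 y2 with h | h <;> rw [h] <;> assumption
  · rintro ⟨x1, x2⟩ ⟨h1, h2⟩ ⟨y1, y2⟩ ⟨h3, h4⟩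
    refine ⟨?_, ?_⟩
    · change x1 ⊓ y1 ∈ FS
      rcases min_choice x1 y1 with h | h <;> rw [h] <;> assumption
    · change x2 ⊓ y2 ∈ FT
      rcases min_choice x2 y2 with h | h <;> rw [h] <;> assumption
  · rw [Set.prod_inter_prod]
    exact hJ
  · rintro ⟨x, y⟩ h ⟨hx, hy⟩
    obtain ⟨w, hw, hw'⟩ := ha x h.1 y h.2 hx hy
    refine ⟨w, hw, ?_⟩
    rintro ⟨z1, z2⟩ hz hzD
    refine hw' z1 z2 hz.1 hz.2 ?_
    by_contra hcon
    push Not at hcon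
    exact hzD hcon
  · rintro ⟨y1, y2⟩ h ⟨h1, h2⟩ hmem
    obtain ⟨P, hP0, hPadd, hPmem, hPm⟩ := hc y1 y2 h.1 h.2 h1 h2
    apply hPm
    have key : ∀ u ∈ (⨆ (x) (hx : x ≤ (y1, y2)) (_ : x ∉ FS ×ˢ FT), LinearMap.range (M.map hx)),
        P u := by
      intro u hu
      refine Submodule.iSup_induction _ (motive := P) hu ?_ hP0 hPadd
      rintro ⟨x1, x2⟩ v hv
      by_cases hx : (x1, x2) ≤ (y1, y2)
      · by_cases hxF : (x1, x2) ∉ FS ×ˢ FT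
        · simp only [hx, hxF, iSup_pos, not_false_eq_true] at hv
          obtain ⟨w, rfl⟩ := hv
          refine hPmem x1 x2 hx.1 hx.2 ?_ w
          by_contra hcon
          push Not at hcon
          exact hxF hcon
        · simp only [hxF, iSup_neg, iSup_bot, not_false_eq_true, Submodule.mem_bot] at hv
          rw [hv]
          exact hP0
      · simp only [hx, iSup_neg, not_false_eq_true, Submodule.mem_bot] at hv
        rw [hv]
        exact hP0
    exact key _ hmem

variable (M : PersistenceModule k (S × T))

theorem ker_h_total (s : S) (t : T) (i j : Set.Ici s) :
    LinearMap.ker (mv M (y := t) i.2 le_rfl) ≤ LinearMap.ker (mv M j.2 le_rfl) ∨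
    LinearMap.ker (mv M (y := t) j.2 le_rfl) ≤ LinearMap.ker (mv M i.2 le_rfl) := by
  rcases le_total i.1 j.1 with h | h
  · exact Or.inl (ker_mv_mono M i.2 le_rfl h le_rfl)
  · exact Or.inr (ker_mv_mono M j.2 le_rfl h le_rfl)

theorem ker_v_total (s : S) (t : T) (i j : Set.Ici t) :
    LinearMap.ker (mv M (x := s) le_rfl i.2) ≤ LinearMap.ker (mv M le_rfl j.2) ∨
    LinearMap.ker (mv M (x := s) le_rfl j.2) ≤ LinearMap.ker (mv M le_rfl i.2) := by
  rcases le_total i.1 j.1 with h | h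
  · exact Or.inl (ker_mv_mono M le_rfl i.2 le_rfl h)
  · exact Or.inr (ker_mv_mono M le_rfl j.2 le_rfl h)

theorem range_h_total (s : S) (t : T) (i j : Set.Iic s) :
    LinearMap.range (mv M (y := t) i.2 le_rfl) ≤ LinearMap.range (mv M j.2 le_rfl) ∨
    LinearMap.range (mv M (y := t) j.2 le_rfl) ≤ LinearMap.range (mv M i.2 le_rfl) := by
  rcases le_total i.1 j.1 with h | h
  · exact Or.inl (range_mv_mono M h le_rfl j.2 le_rfl)
  · exact Or.inr (range_mv_mono M h le_rfl i.2 le_rfl)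

theorem range_v_total (s : S) (t : T) (i j : Set.Iic t) :
    LinearMap.range (mv M (x := s) le_rfl i.2) ≤ LinearMap.range (mv M le_rfl j.2) ∨
    LinearMap.range (mv M (x := s) le_rfl j.2) ≤ LinearMap.range (mv M le_rfl i.2) := by
  rcases le_total i.1 j.1 with h | h
  · exact Or.inl (range_mv_mono M le_rfl h le_rfl j.2)
  · exact Or.inr (range_mv_mono M le_rfl h le_rfl i.2)

variable {M}

/-- Elements dying on the right lift downwards to elements dying on the right. -/
theorem MiddleExact.lift_down (hme : MiddleExact M) {x z : S} {y y' : T} (hx : x ≤ z)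
    (hy : y ≤ y') (b : M.V (x, y')) (h : mv M hx le_rfl b = 0) :
    ∃ a : M.V (x, y), mv M le_rfl hy a = b ∧ mv M hx le_rfl a = 0 :=
  hme.lift hx hy b 0 (by rw [h, map_zero])

theorem MiddleExact.lift_left (hme : MiddleExact M) {x x' : S} {y z : T} (hx : x ≤ x')
    (hy : y ≤ z) (c : M.V (x', y)) (h : mv M le_rfl hy c = 0) :
    ∃ a : M.V (x, y), mv M hx le_rfl a = c ∧ mv M le_rfl hy a = 0 := by
  obtain ⟨a, h1, h2⟩ := hme.lift hx hy 0 c (by rw [h, map_zero])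
  exact ⟨a, h2, h1⟩

/-- Minimal horizontal kernel beyond an ideal. -/
theorem exists_min_ker_h (hfd : ∀ p, FiniteDimensional k (M.V p))
    (DS : Set S) (hDS : IsIdeal DS) (x : S) (hx : x ∈ DS) (y : T)
    (hne : ∃ z, z ∉ DS) : ∃ z, ∃ h : x ≤ z, z ∉ DS ∧ ∀ w : M.V (x, y), mv M h le_rfl w = 0 →
      ∀ z' (h' : x ≤ z'), z' ∉ DS → mv M h' le_rfl w = 0 := by
  have hle : ∀ z, z ∉ DS → x ≤ z := by
    intro z hz
    by_contra hlt
    exact hz (hDS z x (le_of_not_ge hlt) hx)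
  obtain ⟨z0, hz0⟩ := hne
  obtain ⟨i, hi, hmin⟩ := chain_min (fun i : Set.Ici x => LinearMap.ker (mv M (y := y) i.2 le_rfl))
    (fun i => i.1 ∉ DS) ⟨⟨z0, hle z0 hz0⟩, hz0⟩ (by
      intro i j hi hj
      rcases ker_h_total M x y i j with h | h
      · exact ⟨i, hi, le_rfl, h⟩
      · exact ⟨j, hj, h, le_rfl⟩)
  exact ⟨i.1, i.2, hi, fun w hw z' h' hz' => hmin ⟨z', h'⟩ hz' hw⟩

theorem exists_min_ker_v (hfd : ∀ p, FiniteDimensional k (M.V p))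
    (DT : Set T) (hDT : IsIdeal DT) (x : S) (y : T) (hy : y ∈ DT)
    (hne : ∃ z, z ∉ DT) : ∃ z, ∃ h : y ≤ z, z ∉ DT ∧ ∀ w : M.V (x, y), mv M le_rfl h w = 0 →
      ∀ z' (h' : y ≤ z'), z' ∉ DT → mv M le_rfl h' w = 0 := by
  have hle : ∀ z, z ∉ DT → y ≤ z := by
    intro z hz
    by_contra hlt
    exact hz (hDT z y (le_of_not_ge hlt) hy)
  obtain ⟨z0, hz0⟩ := hne
  obtain ⟨i, hi, hmin⟩ := chain_min (fun i : Set.Ici y => LinearMap.ker (mv M (x := x) le_rfl i.2))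
    (fun i => i.1 ∉ DT) ⟨⟨z0, hle z0 hz0⟩, hz0⟩ (by
      intro i j hi hj
      rcases ker_v_total M x y i j with h | h
      · exact ⟨i, hi, le_rfl, h⟩
      · exact ⟨j, hj, h, le_rfl⟩)
  exact ⟨i.1, i.2, hi, fun w hw z' h' hz' => hmin ⟨z', h'⟩ hz' hw⟩

/-- Death blocks. -/
theorem select_db (hfd : ∀ p, FiniteDimensional k (M.V p)) (hme : MiddleExact M)
    (s s' : S) (t t' : T) (hs : s ≤ s') (ht : t ≤ t') (m0 : M.V (s, t))
    (hm0 : m0 ≠ 0) (h1 : mv M hs le_rfl m0 = 0) (h2 : mv M le_rfl ht m0 = 0) :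
    BlockSummand M := by
  let N := LinearMap.ker (mv M (y := t) hs le_rfl) ⊓ LinearMap.ker (mv M (x := s) le_rfl ht)
  have hN : N ≠ ⊥ := fun h => hm0 ((Submodule.eq_bot_iff _).1 h m0 ⟨h1, h2⟩)
  obtain ⟨K1, hK1, hK1N, hK1'⟩ := min_piece
    (fun i : Set.Ici s => LinearMap.ker (mv M (y := t) i.2 le_rfl)) (ker_h_total M s t) N hN
  obtain ⟨K2, hK2, hK2K1, hK2'⟩ := min_piece
    (fun i : Set.Ici t => LinearMap.ker (mv M (x := s) le_rfl i.2)) (ker_v_total M s t) K1 hK1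
  obtain ⟨m, hmK2, hm⟩ := (Submodule.ne_bot_iff _).1 hK2
  let DS : Set S := {x | ∀ h : s ≤ x, LinearMap.ker (mv M (y := t) h le_rfl) ⊓ N = ⊥}
  let DT : Set T := {y | ∀ h : t ≤ y, LinearMap.ker (mv M (x := s) le_rfl h) ⊓ K1 = ⊥}
  have hDS : IsIdeal DS := by
    intro x x' hxx' hx' h
    rw [eq_bot_iff, ← hx' (h.trans hxx')]
    exact inf_le_inf_right _ (ker_mv_mono M h le_rfl hxx' le_rfl)
  have hDT : IsIdeal DT := by
    intro x x' hxx' hx' h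
    rw [eq_bot_iff, ← hx' (h.trans hxx')]
    exact inf_le_inf_right _ (ker_mv_mono M le_rfl h le_rfl hxx')
  have hsD : s ∈ DS := by
    intro h
    rw [eq_bot_iff]
    rintro w ⟨hw, -⟩
    have hw : mv M h le_rfl w = 0 := hw
    rw [mv_self] at hw
    exact hw
  have htD : t ∈ DT := by
    intro h
    rw [eq_bot_iff]
    rintro w ⟨hw, -⟩
    have hw : mv M le_rfl h w = 0 := hw
    rw [mv_self] at hw
    exact hw
  have hs'D : s' ∉ DS := by
    intro h
    apply hN
    rw [← h hs]
    exact (inf_eq_right.2 inf_le_left).symm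
  have ht'D : t' ∉ DT := by
    intro h
    apply hK1
    rw [← h ht]
    exact (inf_eq_right.2 (hK1N.trans inf_le_right)).symm
  have hmS : ∀ z (h : s ≤ z), z ∉ DS → mv M h le_rfl m = 0 := by
    intro z h hz
    rcases hK1' ⟨z, h⟩ with h' | h'
    · exact absurd (fun _ => h') hz
    · exact h' (hK2K1 hmK2)
  have hmT : ∀ z (h : t ≤ z), z ∉ DT → mv M le_rfl h m = 0 := by
    intro z h hz
    rcases hK2' ⟨z, h⟩ with h' | h'
    · exact absurd (fun _ => h') hz
    · exact h' hmK2
  refine splitting' M hfd DS Set.univ DT Set.univ hDS (fun _ _ _ _ => trivial) hDT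
    (fun _ _ _ _ => trivial) s t hsD trivial htD trivial ?_ m ?_ ?_
  · rw [Set.univ_inter, Set.univ_inter]
    exact ⟨⟨(s, t), hsD, htD⟩, Or.inl ⟨DS, DT, ⟨⟨s, hsD⟩, hDS.isConvex⟩, hDS,
      ⟨⟨t, htD⟩, hDT.isConvex⟩, hDT, rfl⟩⟩
  · intro x hx y hy _ _
    obtain ⟨z1, hz1, hz1D, hz1'⟩ := exists_min_ker_h hfd DS hDS x (hDS _ _ hx hsD) y ⟨s', hs'D⟩
    obtain ⟨z2, hz2, hz2D, hz2'⟩ := exists_min_ker_v hfd DT hDT x y (hDT _ _ hy htD) ⟨t', ht'D⟩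
    have hsz1 : s ≤ z1 := by
      by_contra hlt
      exact hz1D (hDS _ _ (le_of_not_ge hlt) hsD)
    have htz2 : t ≤ z2 := by
      by_contra hlt
      exact hz2D (hDT _ _ (le_of_not_ge hlt) htD)
    obtain ⟨w', hw'm, hw'2⟩ := hme.lift_left hx htz2 m (hmT z2 htz2 hz2D)
    have hw'1 : mv M hz1 le_rfl w' = 0 := by
      rw [← mv_mv M hx le_rfl hsz1 le_rfl, hw'm]
      exact hmS z1 hsz1 hz1D
    obtain ⟨w, hww', hw1⟩ := hme.lift_down hz1 hy w' hw'1
    have hw2 : mv M le_rfl hz2 w = 0 := by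
      rw [← mv_mv M le_rfl hy le_rfl htz2, hww', hw'2]
    refine ⟨w, ?_, ?_⟩
    · rw [← hw'm, ← hww', mv_mv]
    · intro a b ha hb hab
      rcases hab with hab | hab
      · exact mv_zero_of M le_rfl hb (hz1' w hw1 a ha hab)
      · exact mv_zero_of M ha le_rfl (hz2' w hw2 b hb hab)
  · intro x y hx hy hxD hyD
    refine ⟨fun u => u = 0, rfl, ?_, ?_, ?_⟩
    · rintro a b rfl rfl
      simp
    · rintro x1 x2 _ _ (h | h)
      · exact absurd trivial h
      · exact absurd trivial h
    · intro h0
      have hxs' : x ≤ s' := by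
        by_contra hlt
        exact hs'D (hDS _ _ (le_of_not_ge hlt) hxD)
      have hyt' : y ≤ t' := by
        by_contra hlt
        exact ht'D (hDT _ _ (le_of_not_ge hlt) hyD)
      -- `m''` dies at `(x, t)` and agrees with `m` at `(s, y)`
      obtain ⟨a, ha1, ha2⟩ := hme.lift_down hx hy (mv M le_rfl hy m) (by
        rw [mv_mv]
        exact h0)
      have hmN : m ∈ N := hK1N (hK2K1 hmK2)
      have hd : mv M le_rfl hy (m - a) = 0 := by
        rw [map_sub, ha1, sub_self]
      have hd' : mv M le_rfl ht (m - a) = 0 := mv_zero_of M le_rfl hyt' hd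
      have haN : a ∈ N := by
        refine ⟨mv_zero_of M hxs' le_rfl ha2, ?_⟩
        change mv M le_rfl ht a = 0
        rw [map_sub, show mv M le_rfl ht m = 0 from hmN.2, zero_sub, neg_eq_zero] at hd'
        exact hd'
      have ha0 : a = 0 := by
        have : a ∈ LinearMap.ker (mv M (y := t) hx le_rfl) ⊓ N := ⟨ha2, haN⟩
        rw [hxD hx] at this
        exact this
      rw [ha0, sub_zero] at hd
      have : m ∈ LinearMap.ker (mv M (x := s) le_rfl hy) ⊓ K1 := ⟨hd, hK2K1 hmK2⟩
      rw [hyD hy] at this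
      exact hm this

/-- Birth blocks. -/
theorem select_bb (hfd : ∀ p, FiniteDimensional k (M.V p)) (hme : MiddleExact M)
    (s s' : S) (t t' : T) (hs : s' ≤ s) (ht : t' ≤ t)
    (hN : LinearMap.range (mv M (y := t) hs le_rfl) ⊔
      LinearMap.range (mv M (x := s) le_rfl ht) ≠ ⊤) :
    BlockSummand M := by
  set N := LinearMap.range (mv M (y := t) hs le_rfl) ⊔ LinearMap.range (mv M (x := s) le_rfl ht)
    with hNdef
  obtain ⟨K1, hK1, hNK1, hK1'⟩ := max_piece
    (fun i : Set.Iic s => LinearMap.range (mv M (y := t) i.2 le_rfl)) (range_h_total M s t) N hN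
  obtain ⟨K2, hK2, hK1K2, hK2'⟩ := max_piece
    (fun i : Set.Iic t => LinearMap.range (mv M (x := s) le_rfl i.2)) (range_v_total M s t) K1 hK1
  let FS : Set S := {x | ∀ h : x ≤ s, LinearMap.range (mv M (y := t) h le_rfl) ⊔ N = ⊤}
  let FT : Set T := {y | ∀ h : y ≤ t, LinearMap.range (mv M (x := s) le_rfl h) ⊔ K1 = ⊤}
  have hFS : IsFilter FS := by
    intro x' x hxx' hx' h
    rw [eq_top_iff, ← hx' (hxx'.trans h)]
    exact sup_le_sup_right (range_mv_mono M hxx' le_rfl h le_rfl) _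
  have hFT : IsFilter FT := by
    intro x' x hxx' hx' h
    rw [eq_top_iff, ← hx' (hxx'.trans h)]
    exact sup_le_sup_right (range_mv_mono M le_rfl hxx' le_rfl h) _
  have hsF : s ∈ FS := by
    intro h
    rw [eq_top_iff]
    intro w _
    exact Submodule.mem_sup_left ⟨w, mv_self ..⟩
  have htF : t ∈ FT := by
    intro h
    rw [eq_top_iff]
    intro w _
    exact Submodule.mem_sup_left ⟨w, mv_self ..⟩
  have hs'F : s' ∉ FS := by
    intro h
    apply hN
    rw [← h hs]
    exact (sup_eq_right.2 le_sup_left).symm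
  have ht'F : t' ∉ FT := by
    intro h
    apply hK1
    rw [← h ht]
    exact (sup_eq_right.2 (le_sup_right.trans hNK1)).symm
  have hlt : ∀ x ∈ FS, s' ≤ x := by
    intro x hx
    by_contra hlt
    exact hs'F (hFS _ _ (le_of_not_ge hlt) hx)
  have hltT : ∀ y ∈ FT, t' ≤ y := by
    intro y hy
    by_contra hlt
    exact ht'F (hFT _ _ (le_of_not_ge hlt) hy)
  have hsurj : ∀ x (hx : x ≤ s) y (hy : y ≤ t), x ∈ FS → y ∈ FT →
      LinearMap.range (mv M hx hy) ⊔ K2 = ⊤ := by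
    intro x hx y hy hxF hyF
    rw [eq_top_iff]
    intro u _
    have hu : u ∈ LinearMap.range (mv M (x := s) le_rfl hy) ⊔ K1 := by
      rw [hyF hy]
      trivial
    obtain ⟨_, ⟨e, rfl⟩, k1, hk1, rfl⟩ := Submodule.mem_sup.1 hu
    refine Submodule.add_mem _ ?_ (Submodule.mem_sup_right (hK1K2 hk1))
    have he : mv M le_rfl hy e ∈ LinearMap.range (mv M (y := t) hx le_rfl) ⊔ N := by
      rw [hxF hx]
      trivial
    have hR : LinearMap.range (mv M (y := t) hx le_rfl) ⊔ N ≤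
        LinearMap.range (mv M (y := t) hx le_rfl) ⊔ LinearMap.range (mv M (x := s) le_rfl ht) :=
      sup_le le_sup_left (sup_le ((range_mv_mono M (hlt x hxF) le_rfl hx le_rfl).trans le_sup_left)
        le_sup_right)
    obtain ⟨_, ⟨f, rfl⟩, _, ⟨b, rfl⟩, hfb⟩ := Submodule.mem_sup.1 (hR he)
    obtain ⟨g, hg1, hg2⟩ := hme.lift hx hy f (e - mv M le_rfl (hltT y hyF) b) (by
      rw [map_sub, mv_mv, ← hfb, add_sub_cancel_right])
    rw [← hfb]
    refine Submodule.add_mem _ (Submodule.mem_sup_left ⟨g, ?_⟩)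
      (Submodule.mem_sup_right (hK1K2 (hNK1 (Submodule.mem_sup_right ⟨b, rfl⟩))))
    rw [← hg1, mv_mv]
  -- a minimal image
  obtain ⟨i, hi, hmin⟩ := chain_min
    (fun i : Set.Iic s × Set.Iic t => LinearMap.range (mv M i.1.2 i.2.2))
    (fun i => i.1.1 ∈ FS ∧ i.2.1 ∈ FT) ⟨(⟨s, le_rfl⟩, ⟨t, le_rfl⟩), hsF, htF⟩ (by
      rintro ⟨⟨a, ha⟩, ⟨b, hb⟩⟩ ⟨⟨c, hc⟩, ⟨d, hd⟩⟩ ⟨h1, h2⟩ ⟨h3, h4⟩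
      refine ⟨(⟨min a c, inf_le_left.trans ha⟩, ⟨min b d, inf_le_left.trans hb⟩), ⟨?_, ?_⟩, ?_, ?_⟩
      · rcases min_choice a c with h | h <;> simp only [h] <;> assumption
      · rcases min_choice b d with h | h <;> simp only [h] <;> assumption
      · exact range_mv_mono M inf_le_left inf_le_left ha hb
      · exact range_mv_mono M inf_le_right inf_le_right hc hd)
  obtain ⟨m, hmi, hmK⟩ : ∃ m ∈ LinearMap.range (mv M i.1.2 i.2.2), m ∉ K2 := by
    by_contra hcon
    push Not at hcon
    have := hsurj _ i.1.2 _ i.2.2 hi.1 hi.2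
    rw [sup_eq_right.2 hcon] at this
    exact hK2 this
  refine splitting' M hfd Set.univ FS Set.univ FT (fun _ _ _ _ => trivial) hFS
    (fun _ _ _ _ => trivial) hFT s t trivial hsF trivial htF ?_ m ?_ ?_
  · rw [Set.inter_univ, Set.inter_univ]
    exact ⟨⟨(s, t), hsF, htF⟩, Or.inr (Or.inl ⟨FS, FT, ⟨⟨s, hsF⟩, hFS.isConvex⟩, hFS,
      ⟨⟨t, htF⟩, hFT.isConvex⟩, hFT, rfl⟩)⟩
  · intro x hx y hy hxF hyF
    obtain ⟨w, hw⟩ := hmin (⟨x, hx⟩, ⟨y, hy⟩) ⟨hxF, hyF⟩ hmi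
    refine ⟨w, hw, ?_⟩
    rintro a b _ _ (h | h)
    · exact absurd trivial h
    · exact absurd trivial h
  · intro y1 y2 h1 h2 _ _
    have hle1 : ∀ x, x ∉ FS → x ≤ s := by
      intro x hx
      by_contra hlt
      exact hx (hFS _ _ (le_of_not_ge hlt) hsF)
    have hle2 : ∀ x, x ∉ FT → x ≤ t := by
      intro x hx
      by_contra hlt
      exact hx (hFT _ _ (le_of_not_ge hlt) htF)
    refine ⟨fun u => ∃ (x1 : S) (x2 : T) (hx1 : x1 ≤ y1) (hx2 : x2 ≤ y2) (a : M.V (x1, y2))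
      (b : M.V (y1, x2)), x1 ∉ FS ∧ x2 ∉ FT ∧ u = mv M hx1 le_rfl a + mv M le_rfl hx2 b,
      ?_, ?_, ?_, ?_⟩
    · exact ⟨s', t', hs.trans h1, ht.trans h2, 0, 0, hs'F, ht'F, by simp⟩
    · rintro _ _ ⟨x1, x2, hx1, hx2, a, b, hx1F, hx2F, rfl⟩ ⟨x1', x2', hx1', hx2', a', b', hx1F', hx2F', rfl⟩
      refine ⟨max x1 x1', max x2 x2', max_le hx1 hx1', max_le hx2 hx2',
        mv M (le_max_left _ _) le_rfl a + mv M (le_max_right _ _) le_rfl a',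
        mv M le_rfl (le_max_left _ _) b + mv M le_rfl (le_max_right _ _) b', ?_, ?_, ?_⟩
      · rcases max_choice x1 x1' with h | h <;> rw [h] <;> assumption
      · rcases max_choice x2 x2' with h | h <;> rw [h] <;> assumption
      · simp only [map_add, mv_mv]
        abel
    · rintro x1 x2 hx1 hx2 (h | h) w
      · exact ⟨x1, t', hx1, ht.trans h2, mv M le_rfl hx2 w, 0, h, ht'F, by simp [mv_mv]⟩
      · exact ⟨s', x2, hs.trans h1, hx2, 0, mv M hx1 le_rfl w, hs'F, h, by simp [mv_mv]⟩
    · rintro ⟨x1, x2, hx1, hx2, a, b, hx1F, hx2F, hab⟩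
      have hx1s := hle1 x1 hx1F
      have hx2t := hle2 x2 hx2F
      obtain ⟨e, he1, he2⟩ := hme.lift h1 hx2 (mv M le_rfl h2 m - mv M hx1s le_rfl a) b (by
        rw [map_sub, mv_mv, mv_mv, hab, add_sub_cancel_left])
      obtain ⟨f, hf1, hf2⟩ := hme.lift hx1s h2 a (m - mv M le_rfl hx2t e) (by
        rw [map_sub, mv_mv, he1, sub_sub_cancel])
      apply hmK
      have hmeq : m = mv M hx1s le_rfl f + mv M le_rfl hx2t e := by
        rw [hf2, sub_add_cancel]
      rw [hmeq]
      refine Submodule.add_mem _ (hK1K2 ?_) ?_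
      · rcases hK1' ⟨x1, hx1s⟩ with h | h
        · exact absurd (fun _ => h) hx1F
        · exact h ⟨f, rfl⟩
      · rcases hK2' ⟨x2, hx2t⟩ with h | h
        · exact absurd (fun _ => h) hx2F
        · exact h ⟨e, rfl⟩

/-- Vertical bands. -/
theorem select_vb (hfd : ∀ p, FiniteDimensional k (M.V p)) (hme : MiddleExact M)
    (s : S) (t : T) (K : Submodule k (M.V (s, t))) (hK : K ≠ ⊥) (DS : Set S)
    (hDS : IsIdeal DS) (hsD : s ∈ DS)
    (h1 : ∀ z (h : s ≤ z), z ∉ DS → ∀ m ∈ K, mv M h le_rfl m = 0)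
    (h2 : ∀ x (h : s ≤ x), x ∈ DS → ∀ m : M.V (s, t), mv M h le_rfl m = 0 → m = 0)
    (h3 : ∀ y (h : t ≤ y), ∀ m ∈ K, mv M le_rfl h m = 0 → m = 0)
    (h4 : ∀ y (h : y ≤ t), K ≤ LinearMap.range (mv M le_rfl h)) :
    BlockSummand M := by
  obtain ⟨L, hL, hLK, hL'⟩ := min_piece
    (fun i : Set.Iic s => LinearMap.range (mv M (y := t) i.2 le_rfl)) (range_h_total M s t) K hK
  obtain ⟨m, hmL, hm⟩ := (Submodule.ne_bot_iff _).1 hL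
  have hmK := hLK hmL
  let FS : Set S := {x | ∀ h : x ≤ s, LinearMap.range (mv M (y := t) h le_rfl) ⊓ K ≠ ⊥}
  have hFS : IsFilter FS := by
    intro x' x hxx' hx' h hbot
    apply hx' (hxx'.trans h)
    rw [eq_bot_iff, ← hbot]
    exact inf_le_inf_right _ (range_mv_mono M hxx' le_rfl h le_rfl)
  have hsF : s ∈ FS := by
    intro h hbot
    apply hK
    rw [eq_bot_iff, ← hbot]
    intro w hw
    exact ⟨⟨w, mv_self ..⟩, hw⟩
  have hle : ∀ x, x ∉ FS → x ≤ s := by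
    intro x hx
    by_contra hlt
    exact hx (hFS _ _ (le_of_not_ge hlt) hsF)
  refine splitting' M hfd DS FS Set.univ Set.univ hDS hFS (fun _ _ _ _ => trivial)
    (fun _ _ _ _ => trivial) s t hsD hsF trivial trivial ?_ m ?_ ?_
  · rw [Set.inter_univ]
    refine ⟨⟨(s, t), ⟨hsF, hsD⟩, trivial⟩, Or.inr (Or.inr (Or.inl ⟨FS ∩ DS, ⟨⟨s, hsF, hsD⟩, ?_⟩, rfl⟩))⟩
    intro p q r hpq hqr hp hr
    exact ⟨hFS _ _ hpq hp.1, hDS _ _ hqr hr.2⟩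
  · intro x hx y hy hxF _
    have hmx : m ∈ LinearMap.range (mv M (y := t) hx le_rfl) := by
      rcases hL' ⟨x, hx⟩ with h | h
      · exact absurd h (hxF hx)
      · exact h hmL
    obtain ⟨f, hf⟩ := hmx
    by_cases hne : ∃ z, z ∉ DS
    · obtain ⟨z, hz, hzD, hz'⟩ := exists_min_ker_h hfd DS hDS x (hDS _ _ hx hsD) y hne
      have hsz : s ≤ z := by
        by_contra hlt
        exact hzD (hDS _ _ (le_of_not_ge hlt) hsD)
      obtain ⟨w, hw1, hw2⟩ := hme.lift_down hz hy f (by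
        rw [← mv_mv M hx le_rfl hsz le_rfl, hf]
        exact h1 z hsz hzD m hmK)
      refine ⟨w, ?_, ?_⟩
      · rw [← hf, ← hw1, mv_mv]
      · rintro a b ha hb (hab | hab)
        · exact mv_zero_of M le_rfl hb (hz' w hw2 a ha hab)
        · exact absurd trivial hab
    · push Not at hne
      obtain ⟨e, he⟩ := h4 y hy hmK
      obtain ⟨w, hw1, hw2⟩ := hme.lift hx hy f e (hf.trans he.symm)
      refine ⟨w, ?_, ?_⟩
      · rw [← hf, ← hw1, mv_mv]
      · rintro a b ha hb (hab | hab)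
        · exact absurd (hne a) hab
        · exact absurd trivial hab
  · intro y1 y2 hy1 hy2 hy1D _
    -- kernels of horizontal maps inside `DS` vanish in every row above
    have hinj : ∀ w : M.V (s, y2), mv M hy1 le_rfl w = 0 → w = 0 := by
      intro w hw
      obtain ⟨a, ha1, ha2⟩ := hme.lift_down hy1 hy2 w hw
      rw [← ha1, h2 y1 hy1 hy1D a ha2, map_zero]
    refine ⟨fun u => u = 0 ∨ ∃ (x1 : S) (hx1 : x1 ≤ y1) (a : M.V (x1, y2)), x1 ∉ FS ∧
      u = mv M hx1 le_rfl a, Or.inl rfl, ?_, ?_, ?_⟩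
    · rintro u u' (rfl | ⟨x1, hx1, a, hx1F, rfl⟩) hu'
      · rw [zero_add]
        exact hu'
      · rcases hu' with rfl | ⟨x1', hx1', a', hx1F', rfl⟩
        · rw [add_zero]
          exact Or.inr ⟨x1, hx1, a, hx1F, rfl⟩
        · refine Or.inr ⟨max x1 x1', max_le hx1 hx1',
            mv M (le_max_left _ _) le_rfl a + mv M (le_max_right _ _) le_rfl a', ?_, ?_⟩
          · rcases max_choice x1 x1' with h | h <;> rw [h] <;> assumption
          · simp only [map_add, mv_mv]
    · rintro x1 x2 hx1 hx2 (h | h) w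
      · exact Or.inr ⟨x1, hx1, mv M le_rfl hx2 w, h, by rw [mv_mv]⟩
      · exact absurd trivial h
    · rintro (h0 | ⟨x1, hx1, a, hx1F, hab⟩)
      · rw [← mv_mv M le_rfl hy2 hy1 le_rfl] at h0
        exact hm (h3 y2 hy2 m hmK (hinj _ h0))
      · have hx1s := hle x1 hx1F
        have heq : mv M hx1s le_rfl a = mv M le_rfl hy2 m := by
          rw [← sub_eq_zero]
          apply hinj
          rw [map_sub, mv_mv, mv_mv, hab, sub_self]
        obtain ⟨f, hf1, hf2⟩ := hme.lift hx1s hy2 a m heq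
        apply hx1F
        intro h hbot
        have : m ∈ LinearMap.range (mv M (y := t) h le_rfl) ⊓ K := ⟨⟨f, hf2⟩, hmK⟩
        rw [hbot] at this
        exact hm this

end Selection

section Main
variable {k : Type} [Field k] {S T : Type} [LinearOrder S] [LinearOrder T]

/-- Exchange of the two coordinates. -/
def swapMod (M : PersistenceModule k (S × T)) : PersistenceModule k (T × S) where
  V x := M.V (x.2, x.1)
  map h := M.map (Prod.mk_le_mk.2 ⟨h.2, h.1⟩)
  map_refl x := M.map_refl (x.2, x.1)
  map_trans _ _ := M.map_trans _ _

theorem swap_middleExact {M : PersistenceModule k (S × T)} (hme : MiddleExact M) :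
    MiddleExact (swapMod M) := by
  intro x x' y y' hx hy mb mc h
  obtain ⟨a, h1, h2⟩ := hme y y' x x' hy hx mc mb h.symm
  exact ⟨a, h2, h1⟩

theorem swap_block {J : Set (T × S)} (hJ : IsBlock J) :
    IsBlock {x : S × T | (x.2, x.1) ∈ J} := by
  obtain ⟨⟨⟨a, b⟩, hab⟩, h⟩ := hJ
  refine ⟨⟨(b, a), hab⟩, ?_⟩
  rcases h with ⟨A, B, h1, h2, h3, h4, rfl⟩ | ⟨A, B, h1, h2, h3, h4, rfl⟩ | ⟨A, h1, rfl⟩ | ⟨A, h1, rfl⟩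
  · refine Or.inl ⟨B, A, h3, h4, h1, h2, ?_⟩
    ext ⟨x, y⟩
    exact and_comm
  · refine Or.inr (Or.inl ⟨B, A, h3, h4, h1, h2, ?_⟩)
    ext ⟨x, y⟩
    exact and_comm
  · refine Or.inr (Or.inr (Or.inr ⟨A, h1, ?_⟩))
    ext ⟨x, y⟩
    exact and_comm
  · refine Or.inr (Or.inr (Or.inl ⟨A, h1, ?_⟩))
    ext ⟨x, y⟩
    exact and_comm

theorem swap_summand {M : PersistenceModule k (S × T)} (h : BlockSummand (swapMod M)) :
    BlockSummand M := by
  obtain ⟨J, v, φ, hJ, h1, h2, h3, h4, h5⟩ := h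
  refine ⟨_, fun x => v (x.2, x.1), fun x => φ (x.2, x.1), swap_block hJ, ?_, ?_, ?_, ?_, ?_⟩
  · exact fun x hx => h1 _ hx
  · exact fun x hx => h2 _ hx
  · exact fun x hx => h3 _ hx
  · exact fun x y h hx => h4 (x.2, x.1) (y.2, y.1) ⟨h.2, h.1⟩ hx
  · exact fun x y h hx => h5 (x.2, x.1) (y.2, y.1) ⟨h.2, h.1⟩ hx

/-- A kernel in the horizontal direction gives a block summand. -/
theorem select_of_ker {M : PersistenceModule k (S × T)}
    (hfd : ∀ p, FiniteDimensional k (M.V p)) (hme : MiddleExact M) (s s' : S) (t : T)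
    (hs : s ≤ s') (m : M.V (s, t)) (hm : m ≠ 0) (h0 : mv M hs le_rfl m = 0) :
    BlockSummand M := by
  by_cases hdb : ∃ (t' : T) (ht : t ≤ t') (m : M.V (s, t)),
      m ≠ 0 ∧ mv M hs le_rfl m = 0 ∧ mv M le_rfl ht m = 0
  · obtain ⟨t', ht, m, hm, h1, h2⟩ := hdb
    exact select_db hfd hme s s' t t' hs ht m hm h1 h2
  push Not at hdb
  obtain ⟨K, hK, -, hK'⟩ := min_piece
    (fun i : Set.Ici s => LinearMap.ker (mv M (y := t) i.2 le_rfl)) (ker_h_total M s t) ⊤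
    (fun h => hm (by
      have : m ∈ (⊤ : Submodule k (M.V (s, t))) := trivial
      rw [h] at this
      exact this))
  simp only [inf_top_eq] at hK'
  have hKs' : K ≤ LinearMap.ker (mv M (y := t) hs le_rfl) := by
    rcases hK' ⟨s', hs⟩ with h | h
    · exact absurd ((Submodule.eq_bot_iff _).1 h m h0) hm
    · exact h
  refine select_vb hfd hme s t K hK
    {x | ∀ h : s ≤ x, LinearMap.ker (mv M (y := t) h le_rfl) = ⊥} ?_ ?_ ?_ ?_ ?_ ?_
  · intro x x' hxx' hx' h
    rw [eq_bot_iff, ← hx' (h.trans hxx')]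
    exact ker_mv_mono M h le_rfl hxx' le_rfl
  · intro h
    rw [eq_bot_iff]
    intro w hw
    have hw : mv M h le_rfl w = 0 := hw
    rw [mv_self] at hw
    exact hw
  · intro z h hz m hm
    rcases hK' ⟨z, h⟩ with h' | h'
    · exact absurd (fun _ => h') hz
    · exact h' hm
  · intro x h hx m hm
    exact (Submodule.eq_bot_iff _).1 (hx h) m hm
  · intro y h m hmK hm0
    by_contra hne
    exact hdb y h m hne (hKs' hmK) hm0
  · intro y h m hmK
    obtain ⟨a, ha, -⟩ := hme.lift_down hs h m (hKs' hmK)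
    exact ⟨a, ha⟩

theorem select_of_image {M : PersistenceModule k (S × T)}
    (hfd : ∀ p, FiniteDimensional k (M.V p)) (hme : MiddleExact M) (s : S) (t : T)
    (hA : ∀ x (h : s ≤ x) (m : M.V (s, t)), mv M h le_rfl m = 0 → m = 0)
    (hB : ∀ y (h : t ≤ y) (m : M.V (s, t)), mv M le_rfl h m = 0 → m = 0)
    (K : Submodule k (M.V (s, t))) (hK : K ≠ ⊥)
    (hKU : ∀ y (h : y ≤ t), K ≤ LinearMap.range (mv M le_rfl h)) :
    BlockSummand M :=
  select_vb hfd hme s t K hK Set.univ (fun _ _ _ _ => trivial) trivial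
    (fun _ _ h => absurd trivial h) (fun x h _ m hm => hA x h m hm)
    (fun y h m _ hm => hB y h m hm) hKU

/-- Every nonzero middle exact pointwise finite-dimensional module has a block summand. -/
theorem exists_blockSummand {M : PersistenceModule k (S × T)}
    (hfd : ∀ p, FiniteDimensional k (M.V p)) (hme : MiddleExact M) (p : S × T) (m : M.V p)
    (hm : m ≠ 0) : BlockSummand M := by
  obtain ⟨s, t⟩ := p
  have hfd' : ∀ p, FiniteDimensional k ((swapMod M).V p) := fun p => hfd _
  have hme' := swap_middleExact hme
  by_cases hA : ∃ (x : S) (h : s ≤ x) (m : M.V (s, t)), mv M h le_rfl m = 0 ∧ m ≠ 0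
  · obtain ⟨x, h, m, h0, hm⟩ := hA
    exact select_of_ker hfd hme s x t h m hm h0
  by_cases hB : ∃ (y : T) (h : t ≤ y) (m : M.V (s, t)), mv M le_rfl h m = 0 ∧ m ≠ 0
  · obtain ⟨y, h, m, h0, hm⟩ := hB
    exact swap_summand (select_of_ker hfd' hme' t y s h m hm h0)
  push Not at hA hB
  obtain ⟨i, -, hi⟩ := chain_min
    (fun i : Set.Iic s => LinearMap.range (mv M (y := t) i.2 le_rfl)) (fun _ => True)
    ⟨⟨s, le_rfl⟩, trivial⟩ (by
      intro i j hi hj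
      rcases range_h_total M s t i j with h | h
      · exact ⟨i, hi, le_rfl, h⟩
      · exact ⟨j, hj, h, le_rfl⟩)
  obtain ⟨j, -, hj⟩ := chain_min
    (fun i : Set.Iic t => LinearMap.range (mv M (x := s) le_rfl i.2)) (fun _ => True)
    ⟨⟨t, le_rfl⟩, trivial⟩ (by
      intro i j hi hj
      rcases range_v_total M s t i j with h | h
      · exact ⟨i, hi, le_rfl, h⟩
      · exact ⟨j, hj, h, le_rfl⟩)
  by_cases hN : LinearMap.range (mv M (y := t) i.2 le_rfl) ⊔
      LinearMap.range (mv M (x := s) le_rfl j.2) = ⊤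
  · by_cases hU : LinearMap.range (mv M (x := s) le_rfl j.2) = ⊥
    · have hR : LinearMap.range (mv M (y := t) i.2 le_rfl) ≠ ⊥ := by
        intro hR
        rw [hU, hR, sup_bot_eq] at hN
        have : m ∈ (⊤ : Submodule k (M.V (s, t))) := trivial
        rw [← hN] at this
        exact hm this
      exact swap_summand (select_of_image hfd' hme' t s (fun y h m => hB y h m)
        (fun x h m => hA x h m) (LinearMap.range (mv M (y := t) i.2 le_rfl)) hR
        (fun x h => hi ⟨x, h⟩ trivial))
    · exact select_of_image hfd hme s t hA hB _ hU (fun y h => hj ⟨y, h⟩ trivial)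
  · exact select_bb hfd hme s i.1 t j.1 i.2 j.2 hN

end Main
end PMod


namespace PMod
section Assemble

variable {k : Type} [Field k] {S T : Type} [LinearOrder S] [LinearOrder T]

/-- The sub-persistence module given by a compatible family of subspaces. -/
def subMod (M : PersistenceModule k (S × T)) (N : ∀ x, Submodule k (M.V x))
    (hN : ∀ x y (h : x ≤ y), ∀ w ∈ N x, M.map h w ∈ N y) : PersistenceModule k (S × T) where
  V x := N x
  map {x y} h := (M.map h).restrict (hN x y h)
  map_refl x := by
    ext w
    exact M.map_self _ _
  map_trans hxy hyz := by
    ext w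
    exact (M.map_map hxy hyz _).symm

theorem subMod_middleExact {M : PersistenceModule k (S × T)} (hme : MiddleExact M)
    (P N : ∀ x, Submodule k (M.V x))
    (hP : ∀ x y (h : x ≤ y), ∀ w ∈ P x, M.map h w ∈ P y)
    (hN : ∀ x y (h : x ≤ y), ∀ w ∈ N x, M.map h w ∈ N y)
    (hc : ∀ x, IsCompl (P x) (N x)) : MiddleExact (subMod M N hN) := by
  intro x x' y y' hx hy mb mc h
  obtain ⟨ma, h1, h2⟩ := hme x x' y y' hx hy mb.1 mc.1 (congrArg Subtype.val h)
  have hma : ma ∈ P (x, y) ⊔ N (x, y) := by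
    rw [(hc _).sup_eq_top]; trivial
  obtain ⟨p, hp, n, hn, rfl⟩ := Submodule.mem_sup.1 hma
  have key : ∀ z (hz : (x, y) ≤ z), M.map hz (p + n) ∈ N z → M.map hz n = M.map hz (p + n) := by
    intro z hz hmem
    rw [map_add] at hmem ⊢
    have h3 : M.map hz p ∈ N z := by
      have := (N z).sub_mem hmem (hN _ _ hz n hn)
      simpa using this
    have h4 := Submodule.disjoint_def.1 (hc z).disjoint _ (hP _ _ hz p hp) h3
    rw [h4, zero_add]
  refine ⟨⟨n, hn⟩, Subtype.ext ?_, Subtype.ext ?_⟩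
  · exact (key _ _ (by rw [h1]; exact mb.2)).trans h1
  · exact (key _ _ (by rw [h2]; exact mc.2)).trans h2

theorem zmin {V : Type} [AddCommGroup V] [Module k V] [FiniteDimensional k V] {ι : Type*}
    (f : ι → Submodule k V) (i0 : ι) (htot : ∀ i j, f i ≤ f j ∨ f j ≤ f i) :
    ∃ i, ∀ j, f i ≤ f j := by
  obtain ⟨a, ⟨i, rfl⟩, hmin⟩ :=
    (wellFounded_lt (α := Submodule k V)).has_min (Set.range f) ⟨_, i0, rfl⟩
  refine ⟨i, fun j => ?_⟩
  rcases htot i j with h | h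
  · exact h
  · exact (eq_of_le_of_not_lt h (hmin _ ⟨j, rfl⟩)).ge

/-- Partial decompositions: a family of block generators together with a complement. -/
structure Good (M : PersistenceModule k (S × T)) (B : Set (∀ x, M.V x))
    (N : ∀ x, Submodule k (M.V x)) : Prop where
  block : ∀ v ∈ B, IsBlock {x | v x ≠ 0}
  push : ∀ v ∈ B, ∀ x y (h : x ≤ y), v x ≠ 0 → M.map h (v x) = v y
  sub : ∀ x y (h : x ≤ y), ∀ w ∈ N x, M.map h w ∈ N y
  indep : ∀ x, LinearIndepOn k (fun v : (∀ x, M.V x) => v x) {v | v ∈ B ∧ v x ≠ 0}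
  compl : ∀ x, IsCompl (Submodule.span k ((fun v : (∀ x, M.V x) => v x) '' B)) (N x)

theorem Good.span_sub {M : PersistenceModule k (S × T)} {B N} (hg : Good M B N)
    (x y : S × T) (h : x ≤ y) (w : M.V x)
    (hw : w ∈ Submodule.span k ((fun v : (∀ x, M.V x) => v x) '' B)) :
    M.map h w ∈ Submodule.span k ((fun v : (∀ x, M.V x) => v y) '' B) := by
  have : Submodule.span k ((fun v : (∀ x, M.V x) => v x) '' B) ≤
      (Submodule.span k ((fun v : (∀ x, M.V x) => v y) '' B)).comap (M.map h) := by
    rw [Submodule.span_le]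
    rintro _ ⟨v, hv, rfl⟩
    simp only [SetLike.mem_coe, Submodule.mem_comap]
    by_cases h0 : v x = 0
    · rw [h0, map_zero]; exact zero_mem _
    · rw [hg.push v hv x y h h0]
      exact Submodule.subset_span ⟨v, hv, rfl⟩
  exact this hw

theorem good_chain {M : PersistenceModule k (S × T)} (hfd : ∀ p, FiniteDimensional k (M.V p))
    (c : Set (Set (∀ x, M.V x) × (∀ x, Submodule k (M.V x))ᵒᵈ))
    (hc : ∀ a ∈ c, Good M a.1 (OrderDual.ofDual a.2)) (hch : IsChain (· ≤ ·) c)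
    (a0 : Set (∀ x, M.V x) × (∀ x, Submodule k (M.V x))ᵒᵈ) (ha0 : a0 ∈ c) :
    Good M (⋃ a ∈ c, a.1) (fun x => ⨅ a ∈ c, (OrderDual.ofDual a.2) x) := by
  have htot : ∀ a ∈ c, ∀ b ∈ c, a ≤ b ∨ b ≤ a := fun a ha b hb => hch.total ha hb
  refine ⟨?_, ?_, ?_, ?_, ?_⟩
  · intro v hv
    simp only [Set.mem_iUnion] at hv
    obtain ⟨a, ha, hv⟩ := hv
    exact (hc a ha).block v hv
  · intro v hv
    simp only [Set.mem_iUnion] at hv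
    obtain ⟨a, ha, hv⟩ := hv
    exact (hc a ha).push v hv
  · intro x y h w hw
    simp only [Submodule.mem_iInf] at hw ⊢
    intro a ha
    exact (hc a ha).sub x y h w (hw a ha)
  · intro x
    have h1 : {v | v ∈ (⋃ a ∈ c, a.1) ∧ v x ≠ 0} = ⋃ a ∈ c, {v | v ∈ a.1 ∧ v x ≠ 0} := by
      ext v
      simp only [Set.mem_ofPred_eq, Set.mem_iUnion]
      constructor
      · rintro ⟨⟨a, ha, hv⟩, h⟩; exact ⟨a, ha, hv, h⟩
      · rintro ⟨a, ha, hv, h⟩; exact ⟨⟨a, ha, hv⟩, h⟩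
    rw [h1]
    refine linearIndepOn_biUnion_of_directed ?_ (fun a ha => (hc a ha).indep x)
    intro a ha b hb
    rcases htot a ha b hb with h | h
    · exact ⟨b, hb, fun v hv => ⟨h.1 hv.1, hv.2⟩, fun v hv => hv⟩
    · exact ⟨a, ha, fun v hv => hv, fun v hv => ⟨h.1 hv.1, hv.2⟩⟩
  · intro x
    have := hfd x
    obtain ⟨⟨a, ha⟩, hmin⟩ := zmin (fun a : c => (OrderDual.ofDual a.1.2) x) ⟨a0, ha0⟩ (by
        rintro ⟨a, ha⟩ ⟨b, hb⟩
        rcases htot a ha b hb with h | h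
        · exact Or.inr (h.2 x)
        · exact Or.inl (h.2 x))
    have hinf : (⨅ b ∈ c, (OrderDual.ofDual b.2) x) = (OrderDual.ofDual a.2) x := by
      apply le_antisymm
      · exact iInf₂_le a ha
      · exact le_iInf₂ fun b hb => hmin ⟨b, hb⟩
    have hspan : Submodule.span k ((fun v : (∀ x, M.V x) => v x) '' (⋃ b ∈ c, b.1)) =
        Submodule.span k ((fun v : (∀ x, M.V x) => v x) '' a.1) := by
      apply le_antisymm
      · rw [Submodule.span_le]
        rintro _ ⟨v, hv, rfl⟩
        simp only [Set.mem_iUnion] at hv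
        obtain ⟨b, hb, hv⟩ := hv
        have hvb : v x ∈ Submodule.span k ((fun v : (∀ x, M.V x) => v x) '' b.1) :=
          Submodule.subset_span ⟨v, hv, rfl⟩
        rcases htot a ha b hb with h | h
        · have hle : Submodule.span k ((fun v : (∀ x, M.V x) => v x) '' a.1) ≤
              Submodule.span k ((fun v : (∀ x, M.V x) => v x) '' b.1) :=
            Submodule.span_mono (Set.image_mono h.1)
          have hN : (OrderDual.ofDual b.2) x = (OrderDual.ofDual a.2) x :=
            le_antisymm (h.2 x) (hmin ⟨b, hb⟩)
          have hcb := (hc b hb).compl x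
          rw [hN] at hcb
          have := eq_of_le_of_inf_le_of_sup_le hle
            (z := (OrderDual.ofDual a.2) x) (by rw [hcb.inf_eq_bot]; exact bot_le)
            (by rw [((hc a ha).compl x).sup_eq_top]; exact le_top)
          rw [this]; exact hvb
        · exact Submodule.span_mono (Set.image_mono h.1) hvb
      · exact Submodule.span_mono (Set.image_mono (Set.subset_biUnion_of_mem
          (u := fun b : Set (∀ x, M.V x) × (∀ x, Submodule k (M.V x))ᵒᵈ => b.1) ha))
    rw [hinf, hspan]
    exact (hc a ha).compl x

theorem good_extend {M : PersistenceModule k (S × T)} (hfd : ∀ p, FiniteDimensional k (M.V p))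
    (hme : MiddleExact M) {B N} (hg : Good M B N) (p : S × T) (hp : N p ≠ ⊥) :
    ∃ B' N', Good M B' N' ∧ B ⊆ B' ∧ N' ≤ N ∧ ¬ N ≤ N' := by
  obtain ⟨m, hm, hm0⟩ := Submodule.exists_mem_ne_zero_of_ne_bot hp
  have hme' := subMod_middleExact hme _ N hg.span_sub hg.sub hg.compl
  have hfd' : ∀ p, FiniteDimensional k ((subMod M N hg.sub).V p) := by
    intro p
    have := hfd p
    exact (inferInstance : FiniteDimensional k (N p))
  obtain ⟨J, v, φ, hJ, hv0, hφ0, h1, hpush, hpull⟩ := exists_blockSummand hfd' hme' p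
    (⟨m, hm⟩ : N p) (fun h => hm0 (congrArg Subtype.val h))
  obtain ⟨v', hv'⟩ : ∃ v' : ∀ x, N x, v' = v := ⟨v, rfl⟩
  obtain ⟨ψ, hψ⟩ : ∃ ψ : ∀ x, N x →ₗ[k] k, ψ = φ := ⟨φ, rfl⟩
  have hv0 : ∀ x, x ∉ J → v' x = 0 := hv' ▸ hv0
  have hφ0 : ∀ x, x ∉ J → ψ x = 0 := hψ ▸ hφ0
  have h1 : ∀ x ∈ J, ψ x (v' x) = 1 := by subst hv' hψ; exact h1
  have hpush : ∀ x y (h : x ≤ y), x ∈ J → M.map h (v' x : M.V x) = v' y := by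
    subst hv'
    intro x y h hx
    exact congrArg Subtype.val (hpush x y h hx)
  have hpull : ∀ x y (h : x ≤ y), y ∈ J → ∀ w : N x,
      ψ y ⟨M.map h w, hg.sub x y h w w.2⟩ = ψ x w := by
    subst hψ
    exact hpull
  clear hv' hψ
  have hsupp : ∀ x, (v' x : M.V x) ≠ 0 ↔ x ∈ J := by
    intro x
    constructor
    · intro h
      by_contra hx
      exact h (by rw [hv0 x hx]; rfl)
    · intro hx h
      have h2 := h1 x hx
      rw [Subtype.ext (a2 := (0 : N x)) h, map_zero] at h2
      exact zero_ne_one h2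
  have hJset : {x | (v' x : M.V x) ≠ 0} = J := Set.ext hsupp
  let u : ∀ x, M.V x := fun x => (v' x : M.V x)
  have hins : ∀ x, Submodule.span k ((fun v : (∀ x, M.V x) => v x) '' (insert u B)) =
      Submodule.span k {u x} ⊔ Submodule.span k ((fun v : (∀ x, M.V x) => v x) '' B) := by
    intro x
    rw [Set.image_insert_eq, Submodule.span_insert]
  refine ⟨insert u B, fun x => (LinearMap.ker (ψ x)).map (N x).subtype,
    ⟨?_, ?_, ?_, ?_, ?_⟩, Set.subset_insert _ _, ?_, ?_⟩
  · rintro w (rfl | hw)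
    · change IsBlock {x | (v' x : M.V x) ≠ 0}
      rw [hJset]; exact hJ
    · exact hg.block w hw
  · rintro w (rfl | hw)
    · intro x y h hx
      exact hpush x y h ((hsupp x).1 hx)
    · exact hg.push w hw
  · rintro x y h _ ⟨w, hw, rfl⟩
    refine ⟨⟨M.map h w, hg.sub x y h w w.2⟩, ?_, rfl⟩
    by_cases hy : y ∈ J
    · have := hpull x y h hy w
      change ψ y _ = 0
      rw [this]; exact hw
    · change ψ y _ = 0
      rw [hφ0 y hy]; rfl
  · intro x
    by_cases hx : x ∈ J
    · refine LinearIndepOn.mono ((hg.indep x).insert (x := u) ?_) ?_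
      · intro hmem
        have h2 : u x ∈ Submodule.span k ((fun v : (∀ x, M.V x) => v x) '' B) :=
          Submodule.span_mono (Set.image_mono fun v hv => hv.1) hmem
        exact (hsupp x).2 hx (Submodule.disjoint_def.1 (hg.compl x).disjoint _ h2 (v' x).2)
      · rintro w ⟨rfl | hw, h⟩
        · exact Set.mem_insert _ _
        · exact Set.mem_insert_of_mem _ ⟨hw, h⟩
    · refine (hg.indep x).mono ?_
      rintro w ⟨rfl | hw, h⟩
      · exact absurd ((hsupp x).1 h) hx
      · exact ⟨hw, h⟩
  · intro x
    rw [hins]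
    constructor
    · rw [Submodule.disjoint_def]
      rintro w hw ⟨n, hn, rfl⟩
      obtain ⟨a, ha, b, hb, hab⟩ := Submodule.mem_sup.1 hw
      obtain ⟨r, rfl⟩ := Submodule.mem_span_singleton.1 ha
      have hbN : b ∈ N x := by
        have : b = ((n - r • v' x : N x) : M.V x) := by
          change b = (n : M.V x) - r • u x
          rw [eq_sub_iff_add_eq, add_comm]; exact hab
        rw [this]; exact (n - r • v' x).2
      have hb0 := Submodule.disjoint_def.1 (hg.compl x).disjoint _ hb hbN
      rw [hb0, add_zero] at hab
      have hn' : n = r • v' x := Subtype.ext hab.symm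
      by_cases hx : x ∈ J
      · have h3 : ψ x n = 0 := hn
        rw [hn', map_smul, h1 x hx, smul_eq_mul, mul_one] at h3
        rw [hn', h3, zero_smul, map_zero]
      · rw [hn', hv0 x hx, smul_zero, map_zero]
    · rw [codisjoint_iff, eq_top_iff]
      rintro w -
      have hw : w ∈ Submodule.span k ((fun v : (∀ x, M.V x) => v x) '' B) ⊔ N x := by
        rw [(hg.compl x).sup_eq_top]; trivial
      obtain ⟨b, hb, n, hn, rfl⟩ := Submodule.mem_sup.1 hw
      have hn2 : n ∈ Submodule.span k {u x} ⊔ (LinearMap.ker (ψ x)).map (N x).subtype := by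
        refine Submodule.mem_sup.2 ⟨ψ x ⟨n, hn⟩ • u x,
          Submodule.mem_span_singleton.2 ⟨_, rfl⟩, n - ψ x ⟨n, hn⟩ • u x,
          ⟨⟨n, hn⟩ - ψ x ⟨n, hn⟩ • v' x, ?_, rfl⟩, by abel⟩
        change ψ x (_ - _) = 0
        by_cases hx : x ∈ J
        · rw [map_sub, map_smul, h1 x hx, smul_eq_mul, mul_one, sub_self]
        · rw [hφ0 x hx]; rfl
      refine Submodule.add_mem _ ?_ ?_
      · exact Submodule.mem_sup_left (Submodule.mem_sup_right hb)
      · exact (sup_le_sup_right le_sup_left _ :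
          Submodule.span k {u x} ⊔ (LinearMap.ker (ψ x)).map (N x).subtype ≤ _) hn2
  · rintro x _ ⟨n, -, rfl⟩
    exact n.2
  · intro hle
    obtain ⟨x, hx⟩ := hJ.1
    obtain ⟨n, hn, hnv⟩ := hle x (v' x).2
    have : n = v' x := Subtype.ext hnv
    rw [this] at hn
    have h4 : ψ x (v' x) = 0 := hn
    rw [h1 x hx] at h4
    exact one_ne_zero h4

theorem exists_good {M : PersistenceModule k (S × T)} (hfd : ∀ p, FiniteDimensional k (M.V p))
    (hme : MiddleExact M) : ∃ B, Good M B (fun _ => ⊥) := by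
  have h0 : Good M ∅ (fun _ => ⊤) := by
    refine ⟨by simp, by simp, fun _ _ _ _ _ => trivial, ?_, ?_⟩
    · intro x
      refine LinearIndepOn.mono (s := ∅) (linearIndepOn_empty k (fun v : (∀ x, M.V x) => v x)) ?_
      rintro v ⟨hv, -⟩
      exact hv
    · intro x
      simpa using isCompl_bot_top
  obtain ⟨a, -, ha⟩ := zorn_le_nonempty₀
    {a : Set (∀ x, M.V x) × (∀ x, Submodule k (M.V x))ᵒᵈ | Good M a.1 (OrderDual.ofDual a.2)}
    (fun c hcs hch y hy => ⟨(⋃ a ∈ c, a.1,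
        OrderDual.toDual (fun x => ⨅ a ∈ c, (OrderDual.ofDual a.2) x)),
      good_chain hfd c hcs hch y hy, fun z hz => ⟨Set.subset_biUnion_of_mem
          (u := fun b : Set (∀ x, M.V x) × (∀ x, Submodule k (M.V x))ᵒᵈ => b.1) hz,
        fun x => iInf₂_le z hz⟩⟩)
    (∅, OrderDual.toDual (fun _ => ⊤)) h0
  have hN : OrderDual.ofDual a.2 = fun _ => ⊥ := by
    funext p
    by_contra hp
    obtain ⟨B', N', hg, hB, hN, hn⟩ := good_extend hfd hme ha.prop p hp
    have := ha.le_of_ge (y := (B', OrderDual.toDual N')) hg ⟨hB, hN⟩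
    exact hn this.2
  have := ha.prop
  refine ⟨a.1, ?_⟩
  rw [← hN]
  exact this

theorem main_decomp (M : PersistenceModule k (S × T)) (hfd : ∀ p, FiniteDimensional k (M.V p))
    (hme : MiddleExact M) :
    ∃ (ι : Type) (I : ι → Set (S × T)) (hI : ∀ i, IsBlock (I i)),
      Isomorphic M (directSum fun i => intervalModule k (I i) (hI i).isConvex) := by
  classical
  obtain ⟨B, hg⟩ := exists_good hfd hme
  refine ⟨B, fun v => {x | v.1 x ≠ 0}, fun v => hg.block v.1 v.2, ?_⟩
  let D := directSum fun v : B => intervalModule k {x | v.1 x ≠ 0} (hg.block v.1 v.2).isConvex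
  let F0 : ∀ x, (Π₀ v : B, kMod k {x | v.1 x ≠ 0} x) →ₗ[k] M.V x := fun x =>
    DFinsupp.lsum ℕ (fun v : B =>
      (LinearMap.toSpanSingleton k (M.V x) (v.1 x)).comp
        (kMod k {x | v.1 x ≠ 0} x).subtype)
  let F : ∀ x, D.V x →ₗ[k] M.V x := F0
  have hFs : ∀ x (v : B) (c : kMod k {x | v.1 x ≠ 0} x),
      F0 x (DFinsupp.single v c) = (c : k) • v.1 x := by
    intro x v c
    exact (DFinsupp.lsum_single ℕ _ _ _)
  have hnat : ∀ x y (h : x ≤ y), (M.map h).comp (F x) = (F y).comp (D.map h) := by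
    intro x y h
    refine DFinsupp.lhom_ext (R := k) (M := fun v : B => kMod k {x | v.1 x ≠ 0} x) ?_
    intro v c
    have hD : D.map h (DFinsupp.single v c : Π₀ v : B, kMod k {x | v.1 x ≠ 0} x) =
        (DFinsupp.single v (intervalMap k {x | v.1 x ≠ 0} h c) :
          Π₀ v : B, kMod k {x | v.1 x ≠ 0} y) := by
      exact DFinsupp.mapRange_single (hf := fun i => map_zero _)
    have h1 : M.map h (F0 x (DFinsupp.single v c)) =
        F0 y (DFinsupp.single v (intervalMap k {x | v.1 x ≠ 0} h c)) := by
      rw [hFs, hFs, map_smul]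
      by_cases hx : v.1 x = 0
      · have : c = 0 := Subtype.ext (kMod_coe_eq_zero k (by simpa using hx) c)
        rw [this, map_zero]; simp
      · rw [hg.push v.1 v.2 x y h hx]
        by_cases hy : v.1 y = 0
        · rw [hy, smul_zero, smul_zero]
        · congr 1
          simp [intervalMap, hy]
    refine h1.trans ?_
    exact (congrArg (F y) hD).symm
  have hinj : ∀ x, Function.Injective (F x) := by
    intro x
    change Function.Injective (F0 x)
    rw [injective_iff_map_eq_zero]
    intro f hf
    have hsum : F0 x f = ∑ v ∈ f.support, ((f v : kMod k {x | v.1 x ≠ 0} x) : k) • v.1 x := by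
      conv_lhs => rw [← DFinsupp.sum_single (f := f)]
      rw [DFinsupp.sum, map_sum]
      exact Finset.sum_congr rfl fun v _ => hFs x v (f v)
    let g : (∀ x, M.V x) → k := fun w => if h : w ∈ B then (f ⟨w, h⟩).1 else 0
    have hgv : ∀ v : B, g v.1 = (f v).1 := fun v => by simp [g]
    have hli := linearIndepOn_iff'.1 (hg.indep x)
      (f.support.map (Function.Embedding.subtype _)) g ?_ ?_
    · ext v
      by_contra hv
      have hvs : v ∈ f.support := by
        rw [DFinsupp.mem_support_toFun]
        intro h
        exact hv (by rw [h]; rfl)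
      have := hli v.1 (Finset.mem_map.2 ⟨v, hvs, rfl⟩)
      rw [hgv] at this
      exact hv this
    · intro w hw
      obtain ⟨v, hv, rfl⟩ := Finset.mem_map.1 (Finset.mem_coe.1 hw)
      refine ⟨v.2, fun h0 => ?_⟩
      rw [DFinsupp.mem_support_toFun] at hv
      exact hv (Subtype.ext (kMod_coe_eq_zero k (by simpa using h0) (f v)))
    · rw [Finset.sum_map, ← hf, hsum]
      exact Finset.sum_congr rfl fun v _ => by
        rw [← hgv]; rfl
  have hsurj : ∀ x, Function.Surjective (F x) := by
    intro x
    rw [← LinearMap.range_eq_top, eq_top_iff]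
    have h1 := (hg.compl x).sup_eq_top
    rw [sup_bot_eq] at h1
    rw [← h1, Submodule.span_le]
    rintro _ ⟨v, hv, rfl⟩
    by_cases hx : v x = 0
    · simp only [hx]; exact zero_mem _
    · refine ⟨(DFinsupp.single ⟨v, hv⟩ (kGen k (I := {x | v x ≠ 0}) hx) :
        Π₀ v : B, kMod k {x | v.1 x ≠ 0} x), ?_⟩
      exact (hFs x _ _).trans (one_smul k _)
  let E : ∀ x, D.V x ≃ₗ[k] M.V x := fun x => LinearEquiv.ofBijective (F x) ⟨hinj x, hsurj x⟩
  refine ⟨⟨fun x => (E x).symm.toLinearMap, ?_⟩, fun x => (E x).symm.bijective⟩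
  intro x y h
  ext m
  obtain ⟨d, rfl⟩ := (E x).surjective m
  change D.map h ((E x).symm (E x d)) = (E y).symm (M.map h (E x d))
  rw [LinearEquiv.symm_apply_apply, LinearEquiv.eq_symm_apply]
  exact (LinearMap.congr_fun (hnat x y h) d).symm

end Assemble
end PMod

open PMod in
/-- Theorem 1.3: pointwise finite-dimensional middle exact persistence modules over a
product of two totally ordered sets decompose into block modules. -/
theorem stmt2 {k : Type} [Field k] {S T : Type} [LinearOrder S] [LinearOrder T]
    (M : PersistenceModule k (S × T)) (hfd : ∀ p, FiniteDimensional k (M.V p))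
    (hme : MiddleExact M) :
    ∃ (ι : Type) (I : ι → Set (S × T)) (hI : ∀ i, IsBlock (I i)),
      Isomorphic M (directSum fun i => intervalModule k (I i) (hI i).isConvex) := by
  exact main_decomp M hfd hme
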